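/- Let G be a locally finite vertex-transitive planar graph with exactly one end. Then every face boundary of any planar embedding of G contains only finitely many edges. -/

import Mathlib

open SimpleGraph

/-- A topological embedding of a graph `G` in the plane: vertices are points, edges are
arcs meeting only at common endpoints and avoiding other vertices. -/
structure PlanarEmbedding {V : Type*} (G : SimpleGraph V) where
  vpos : V → ℝ × ℝ
  vinj : Function.Injective vpos
  arc : ∀ ⦃u v : V⦄, G.Adj u v → Set (ℝ × ℝ)
  arc_isArc : ∀ ⦃u v : V⦄ (h : G.Adj u v),
    ∃ f : Path (vpos u) (vpos v), Function.Injective f ∧ Set.range f = arc h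
  arc_symm : ∀ ⦃u v : V⦄ (h : G.Adj u v), arc h.symm = arc h
  arc_inter : ∀ ⦃u v u' v' : V⦄ (h : G.Adj u v) (h' : G.Adj u' v'),
    s(u, v) ≠ s(u', v') → arc h ∩ arc h' ⊆ vpos '' (({u, v} : Set V) ∩ {u', v'})
  arc_vertex : ∀ ⦃u v : V⦄ (h : G.Adj u v) (w : V), vpos w ∈ arc h → w = u ∨ w = v

/-- The point set of the embedded graph. -/
def PlanarEmbedding.image {V : Type*} {G : SimpleGraph V} (emb : PlanarEmbedding G) :
    Set (ℝ × ℝ) :=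
  Set.range emb.vpos ∪ ⋃ (u : V) (v : V) (h : G.Adj u v), emb.arc h

/-- A face of the embedding: a connected component of the complement of the image. -/
def PlanarEmbedding.IsFace {V : Type*} {G : SimpleGraph V} (emb : PlanarEmbedding G)
    (F : Set (ℝ × ℝ)) : Prop :=
  ∃ x ∈ emb.imageᶜ, F = connectedComponentIn emb.imageᶜ x

/-- The boundary of a face: the set of edges whose arcs lie in the closure of the face. -/
def PlanarEmbedding.boundaryEdges {V : Type*} {G : SimpleGraph V} (emb : PlanarEmbedding G)
    (F : Set (ℝ × ℝ)) : Set (Sym2 V) :=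
  {e | ∃ (u v : V) (h : G.Adj u v), e = s(u, v) ∧ emb.arc h ⊆ closure F}

/-- A peripheral cycle: a cycle that is induced (chordless) and non-separating. -/
def IsPeripheral {V : Type*} (G : SimpleGraph V) {v : V} (w : G.Walk v v) : Prop :=
  w.IsCycle ∧ (∀ a ∈ w.support, ∀ b ∈ w.support, G.Adj a b → s(a, b) ∈ w.edges) ∧
    ({x | x ∉ w.support} = (∅ : Set V) ∨ (G.induce {x | x ∉ w.support}).Connected)

/-- A 3-connected graph: more than 3 vertices, and removing any at most 2 vertices leaves
it connected. -/
def ThreeConnected {V : Type*} (G : SimpleGraph V) : Prop :=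
  (3 < Nat.card V ∨ Infinite V) ∧
    ∀ s : Set V, s.Finite → s.ncard ≤ 2 → (G.induce sᶜ).Connected

/-- A locally finite graph has exactly one end. -/
def OneEnded {V : Type*} (G : SimpleGraph V) : Prop :=
  ∀ K : Finset V, ∃! C : G.ComponentCompl (K : Set V), C.supp.Infinite

/-!
Suppose that `G` contains disjoint vertex sets `R₀, R₁, R₂` and `D₀, D₁, D₂` for which
`Rᵢ ∪ Dⱼ` is connected unless `i = j = 0`, where `R₀` is finite and `D₀` cofinite. By
transitivity, `R₀` may be moved to contain any given vertex on the closure of a face `F`. If `F`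
touched infinitely many vertices, it would touch one in `D₀`, and a path through `F` would complete
a drawing of `K₃,₃` in the plane. So `F` touches finitely many vertices.

To find these sets, note first that no bounded number of vertices can separate every finite set
from infinity: translating ever larger separated sets so that their boundaries pass through a fixed
vertex, and passing to a limit, would yield a set with finite boundary that is neither finite nor
cofinite, against one-endedness. By Menger's theorem and compactness there are three disjoint rays.
One of them is joined to the two others by walks far out, again by one-endedness. Two successive
such connections give `D₁` and `D₂`, a vertex between them on the middle ray gives `R₀`, initial
segments of the outer rays give `R₁` and `R₂`, and the part of `G` at infinity gives `D₀`.
-/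

section PlaneTopology

theorem exists_continuous_sq_eq {X : Type*} [TopologicalSpace X] [SimplyConnectedSpace X]
    [LocallyPathConnectedSpace X] {g : X → ℂ} (hg : Continuous g) (hg₀ : ∀ x, g x ≠ 0) :
    ∃ r : X → ℂ, Continuous r ∧ ∀ x, r x ^ 2 = g x := by
  have huniv : IsSimplyConnected (Set.univ : Set X) :=
    (Homeomorph.Set.univ X).toHomotopyEquiv.simplyConnectedSpace
  obtain ⟨r, hr, hsq⟩ := Complex.exists_continuousOn_pow_eq huniv isOpen_univ
    hg.continuousOn (by simpa using hg₀) two_ne_zero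
  exact ⟨r, continuousOn_univ.1 hr, hsq⟩

theorem extend_mem_range {X : Type*} [TopologicalSpace X] {x y : X} (γ : Path x y) (t : ℝ) :
    γ.extend t ∈ Set.range γ :=
  γ.extend_range ▸ Set.mem_range_self t

theorem extend_sub_ne_zero {a b z : ℂ} {γ : Path a b} (hz : z ∉ Set.range γ) (t : ℝ) :
    γ.extend t - z ≠ 0 :=
  sub_ne_zero.2 fun h ↦ hz (h ▸ extend_mem_range γ t)

open Classical in
/-- The ratio `r 1 / r 0` for a continuous square root `r` of `γ - z`: a square root of
`(b - z) / (a - z)` that remembers the parity of the winding of `γ` around `z`. It is `0` if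
no such `r` exists. -/
noncomputable def sqrtRatio {a b : ℂ} (γ : Path a b) (z : ℂ) : ℂ :=
  if h : ∃ r : ℝ → ℂ, Continuous r ∧ ∀ t, r t ^ 2 = γ.extend t - z then
    h.choose 1 / h.choose 0
  else 0

theorem sqrtRatio_eq {a b z c : ℂ} {γ : Path a b} {r : ℝ → ℂ} (hz : z ∉ Set.range γ)
    (hr : Continuous r) (hc : c ≠ 0) (hsq : ∀ t, r t ^ 2 = c * (γ.extend t - z)) :
    sqrtRatio γ z = r 1 / r 0 := by
  have hγ := extend_sub_ne_zero hz
  have hr₀ : ∀ t, r t ≠ 0 := fun t h ↦ mul_ne_zero hc (hγ t) (by simp [← hsq, h])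
  have hex : ∃ r : ℝ → ℂ, Continuous r ∧ ∀ t, r t ^ 2 = γ.extend t - z :=
    exists_continuous_sq_eq (by fun_prop) hγ
  obtain ⟨hs, hssq⟩ := hex.choose_spec
  rw [sqrtRatio, dif_pos hex]
  set s := hex.choose
  have hs₀ : ∀ t, s t ≠ 0 := fun t h ↦ hγ t (by simp [← hssq, h])
  have heq : s 1 * r 0 = s 0 * r 1 :=
    isPreconnected_univ.eq_of_sq_eq (f := fun t ↦ s t * r 0) (g := fun t ↦ s 0 * r t)
      (by fun_prop) (by fun_prop)
      (fun t _ ↦ by simp only [Pi.pow_apply, mul_pow, hsq, hssq]; ring)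
      (fun _ ↦ mul_ne_zero (hs₀ 0) (hr₀ _)) (Set.mem_univ 0) rfl (Set.mem_univ 1)
  rw [div_eq_div_iff (hs₀ 0) (hr₀ 0), heq, mul_comm]

theorem sq_sqrtRatio {a b z : ℂ} {γ : Path a b} (hz : z ∉ Set.range γ) :
    sqrtRatio γ z ^ 2 = (b - z) / (a - z) := by
  obtain ⟨r, hr, hsq⟩ := exists_continuous_sq_eq (g := fun t ↦ γ.extend t - z) (by fun_prop)
    (extend_sub_ne_zero hz)
  rw [sqrtRatio_eq hz hr one_ne_zero (by simpa using hsq), div_pow, hsq, hsq,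
    γ.extend_one, γ.extend_zero]

theorem sqrtRatio_ne_zero {a b z : ℂ} {γ : Path a b} (hz : z ∉ Set.range γ) :
    sqrtRatio γ z ≠ 0 := by
  intro h
  have hsq := sq_sqrtRatio hz
  have ha : a ≠ z := fun h ↦ hz ⟨0, by simp [h]⟩
  have hb : b ≠ z := fun h ↦ hz ⟨1, by simp [h]⟩
  simp [h, sub_ne_zero.2 ha, sub_ne_zero.2 hb, eq_comm] at hsq

/-- Both sides are the total change of a square root of `e s - f t` on the rectangle, along the
two ways around its boundary. -/
theorem sqrtRatio_mul_sqrtRatio {a b c d : ℂ} {e : Path a b} {f : Path c d}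
    (hef : Disjoint (Set.range e) (Set.range f)) :
    sqrtRatio e c * sqrtRatio f b = sqrtRatio e d * sqrtRatio f a := by
  have he_notMem (s : ℝ) : e.extend s ∉ Set.range f :=
    hef.notMem_of_mem_left (extend_mem_range e s)
  have hf_notMem (t : ℝ) : f.extend t ∉ Set.range e :=
    hef.notMem_of_mem_right (extend_mem_range f t)
  obtain ⟨R, hR, hsq⟩ := exists_continuous_sq_eq
    (g := fun x : ℝ × ℝ ↦ e.extend x.1 - f.extend x.2) (by fun_prop)
    fun x ↦ extend_sub_ne_zero (hf_notMem x.2) x.1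
  have hR₀ : ∀ x, R x ≠ 0 := fun x h ↦
    extend_sub_ne_zero (hf_notMem x.2) x.1 (by simp [← hsq, h])
  have he (t : ℝ) : sqrtRatio e (f.extend t) = R (1, t) / R (0, t) :=
    sqrtRatio_eq (r := fun s ↦ R (s, t)) (hf_notMem t) (by fun_prop) one_ne_zero
      fun s ↦ by simp [hsq]
  have hf (s : ℝ) : sqrtRatio f (e.extend s) = R (s, 1) / R (s, 0) :=
    sqrtRatio_eq (r := fun t ↦ R (s, t)) (he_notMem s) (by fun_prop)
      (neg_ne_zero.2 one_ne_zero) fun t ↦ by simp [hsq]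
  have he₀ := he 0
  have he₁ := he 1
  have hf₀ := hf 0
  have hf₁ := hf 1
  simp only [Path.extend_zero, Path.extend_one] at he₀ he₁ hf₀ hf₁
  rw [he₀, he₁, hf₀, hf₁]
  have := hR₀ (0, 0); have := hR₀ (1, 0); have := hR₀ (0, 1)
  field_simp

theorem prod_mul_prod_eq_neg_of_sq_eq {p q : Fin 3 → ℂ} {σ τ : Fin 3 → Fin 3 → Fin 3 → ℂ}
    (hp : Function.Injective p)
    (hσ : ∀ i j k, i ≠ k → σ i j k ^ 2 = (q j - p k) / (p i - p k))
    (hστ : ∀ i j k l, i ≠ k → j ≠ l → σ i j k * τ k l j = τ i j l * σ k l i)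
    {i k : Fin 3} (hik : i ≠ k) :
    (∏ j, (q j - p k)) * ∏ j, ∏ l ∈ {j}ᶜ, τ k l j =
      -((∏ j, (q j - p i)) * ∏ j, ∏ l ∈ {j}ᶜ, τ i l j) := by
  have hcomm (f : Fin 3 → Fin 3 → ℂ) :
      ∏ j, ∏ l ∈ {j}ᶜ, f j l = ∏ l, ∏ j ∈ {l}ᶜ, f j l :=
    Finset.prod_comm' (by simp [eq_comm])
  have hprod {i k : Fin 3} (hik : i ≠ k) :
      ∏ j, ∏ _l ∈ ({j}ᶜ : Finset (Fin 3)), σ i j k = (∏ j, (q j - p k)) / (p i - p k) ^ 3 := by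
    simp only [Finset.prod_const, Finset.card_compl, Finset.card_singleton, Fintype.card_fin,
      Nat.reduceSub, hσ i _ k hik, Finset.prod_div_distrib, Finset.card_univ]
  have hmul : (∏ j, ∏ _l ∈ {j}ᶜ, σ i j k) * ∏ j, ∏ l ∈ {j}ᶜ, τ k l j =
      (∏ j, ∏ l ∈ {j}ᶜ, τ i j l) * ∏ j, ∏ l ∈ {j}ᶜ, σ k l i := by
    simp only [← Finset.prod_mul_distrib]
    exact Finset.prod_congr rfl fun j _ ↦ Finset.prod_congr rfl fun l hl ↦
      hστ i j k l hik (by simpa [eq_comm] using hl)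
  rw [hprod hik, hcomm fun j l ↦ τ i j l, hcomm fun _ l ↦ σ k l i, hprod hik.symm,
    ← neg_sub (p i) (p k)] at hmul
  have hne : p i - p k ≠ 0 := sub_ne_zero.2 (hp.ne hik)
  field_simp at hmul
  linear_combination hmul

/-- If there were no crossing, then the quantities `x k` below would be nonzero and change sign
with every change of the index, which is impossible for three indices. -/
theorem exists_not_disjoint_range_path {p q : Fin 3 → ℂ} (γ : ∀ i j, Path (p i) (q j)) :
    ∃ i j k l, i ≠ k ∧ j ≠ l ∧ ¬ Disjoint (Set.range (γ i j)) (Set.range (γ k l)) := by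
  by_contra! hdisj
  have hp : ∀ i j k, i ≠ k → p k ∉ Set.range (γ i j) := fun i j k hik ↦ by
    obtain ⟨l, hl⟩ := exists_ne j
    exact (hdisj k l i j hik.symm hl).notMem_of_mem_left ⟨0, (γ k l).source⟩
  have hq : ∀ i j l, j ≠ l → q l ∉ Set.range (γ i j) := fun i j l hjl ↦ by
    obtain ⟨k, hk⟩ := exists_ne i
    exact (hdisj k l i j hk hjl.symm).notMem_of_mem_left ⟨1, (γ k l).target⟩
  have hp_inj : Function.Injective p := fun i k h ↦ by
    by_contra hik
    exact hp i 0 k hik ⟨0, by simp [h]⟩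
  have hpq : ∀ j k, q j ≠ p k := fun j k h ↦ by
    obtain ⟨i, hi⟩ := exists_ne k
    exact hp i j k hi ⟨1, by simp [h]⟩
  let x : Fin 3 → ℂ := fun k ↦
    (∏ j, (q j - p k)) * ∏ j, ∏ l ∈ {j}ᶜ, sqrtRatio (γ k l) (q j)
  have hx₀ : x 0 ≠ 0 := by
    refine mul_ne_zero (Finset.prod_ne_zero_iff.2 fun j _ ↦ sub_ne_zero.2 (hpq j 0))
      (Finset.prod_ne_zero_iff.2 fun j _ ↦ Finset.prod_ne_zero_iff.2 fun l hl ↦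
        sqrtRatio_ne_zero (hq 0 l j (by simpa using hl)))
  have hx : ∀ i k, i ≠ k → x k = -x i := fun i k hik ↦
    prod_mul_prod_eq_neg_of_sq_eq (σ := fun i j k ↦ sqrtRatio (γ i j) (p k))
      (τ := fun i j l ↦ sqrtRatio (γ i j) (q l)) hp_inj
      (fun i j k hik ↦ sq_sqrtRatio (hp i j k hik))
      (fun i j k l hik hjl ↦ sqrtRatio_mul_sqrtRatio (hdisj i j k l hik hjl)) hik
  have h01 : x 1 = -x 0 := hx 0 1 (by decide)
  have h12 : x 2 = -x 1 := hx 1 2 (by decide)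
  have h20 : x 0 = -x 2 := hx 2 0 (by decide)
  exact hx₀ (by linear_combination (h20 - h12 + h01) / 2)

theorem exists_not_disjoint_of_joinedIn {p q : Fin 3 → ℝ × ℝ}
    {E : Fin 3 → Fin 3 → Set (ℝ × ℝ)} (hE : ∀ i j, JoinedIn (E i j) (p i) (q j)) :
    ∃ i j k l, i ≠ k ∧ j ≠ l ∧ ¬ Disjoint (E i j) (E k l) := by
  choose γ hγ using hE
  let φ := Complex.equivRealProdCLM.symm
  obtain ⟨i, j, k, l, hik, hjl, h⟩ :=
    exists_not_disjoint_range_path fun i j ↦ (γ i j).map φ.continuous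
  refine ⟨i, j, k, l, hik, hjl, fun hdisj ↦ h ?_⟩
  have hrange (i j) : Set.range ((γ i j).map φ.continuous) ⊆ φ '' E i j := by
    rintro _ ⟨t, rfl⟩
    exact ⟨γ i j t, hγ i j t, rfl⟩
  exact ((Set.disjoint_image_iff φ.injective).2 hdisj).mono (hrange i j) (hrange k l)

theorem joinedIn_compl_of_mem_closure {X : Type*} [TopologicalSpace X]
    [LocallyPathConnectedSpace X] {F K : Set X} (hF : IsPreconnected F) (hK : IsClosed K)
    (hFK : Disjoint F K) {x y : X} (hx : x ∈ closure F) (hy : y ∈ closure F) (hxK : x ∉ K)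
    (hyK : y ∉ K) : JoinedIn Kᶜ x y := by
  have hF' : IsPreconnected (F ∪ {x, y}) :=
    hF.subset_closure Set.subset_union_left
      (Set.union_subset subset_closure (Set.pair_subset hx hy))
  have hF'K : F ∪ {x, y} ⊆ Kᶜ :=
    Set.union_subset hFK.subset_compl_right (Set.pair_subset hxK hyK)
  have hconn : IsPathConnected (connectedComponentIn Kᶜ x) :=
    hK.isOpen_compl.connectedComponentIn.isConnected_iff_isPathConnected.1
      (isConnected_connectedComponentIn_iff.2 hxK)
  exact (hconn.joinedIn x (mem_connectedComponentIn hxK) y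
    (hF'.subset_connectedComponentIn (by simp) hF'K (by simp))).mono
      (connectedComponentIn_subset _ _)

end PlaneTopology

section PlanarDrawing

variable {V : Type*} {G : SimpleGraph V}

theorem connected_induce_image {W : Type*} {H : SimpleGraph W} (f : G →g H) {S : Set V}
    (hS : (G.induce S).Connected) : (H.induce (f '' S)).Connected := by
  let g : G.induce S →g H.induce (f '' S) :=
    ⟨fun x ↦ ⟨f x, Set.mem_image_of_mem f x.2⟩, fun h ↦ f.map_adj h⟩
  refine hS.map g ?_
  rintro ⟨_, x, hx, rfl⟩
  exact ⟨⟨x, hx⟩, rfl⟩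

/-- The part of the drawing that represents the subgraph of `G` induced on `S`. -/
def PlanarEmbedding.drawing (emb : PlanarEmbedding G) (S : Set V) : Set (ℝ × ℝ) :=
  emb.vpos '' S ∪ ⋃ (u ∈ S) (v ∈ S) (h : G.Adj u v), emb.arc h

namespace PlanarEmbedding

variable (emb : PlanarEmbedding G) {S T : Set V}

theorem mem_drawing {x : ℝ × ℝ} : x ∈ emb.drawing S ↔
    (∃ u ∈ S, emb.vpos u = x) ∨ ∃ u ∈ S, ∃ v ∈ S, ∃ h : G.Adj u v, x ∈ emb.arc h := by
  simp [drawing]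

theorem vpos_mem_drawing {v : V} (hv : v ∈ S) : emb.vpos v ∈ emb.drawing S :=
  Or.inl ⟨v, hv, rfl⟩

theorem arc_subset_drawing {u v : V} (h : G.Adj u v) (hu : u ∈ S) (hv : v ∈ S) :
    emb.arc h ⊆ emb.drawing S :=
  fun _ hx ↦ emb.mem_drawing.2 (Or.inr ⟨u, hu, v, hv, h, hx⟩)

theorem vpos_mem_arc_left {u v : V} (h : G.Adj u v) : emb.vpos u ∈ emb.arc h := by
  obtain ⟨f, -, hf⟩ := emb.arc_isArc h
  exact hf ▸ ⟨0, f.source⟩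

theorem vpos_mem_arc_right {u v : V} (h : G.Adj u v) : emb.vpos v ∈ emb.arc h := by
  obtain ⟨f, -, hf⟩ := emb.arc_isArc h
  exact hf ▸ ⟨1, f.target⟩

theorem joinedIn_arc {u v : V} (h : G.Adj u v) :
    JoinedIn (emb.arc h) (emb.vpos u) (emb.vpos v) := by
  obtain ⟨f, -, hf⟩ := emb.arc_isArc h
  exact ⟨f, fun t ↦ hf ▸ Set.mem_range_self t⟩

theorem drawing_subset_image : emb.drawing S ⊆ emb.image := by
  rintro x (⟨u, -, rfl⟩ | hx)
  · exact Or.inl ⟨u, rfl⟩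
  · simp only [Set.mem_iUnion] at hx
    obtain ⟨u, -, v, -, h, hx⟩ := hx
    exact Or.inr (by simpa only [Set.mem_iUnion] using ⟨u, v, h, hx⟩)

theorem isCompact_drawing (hS : S.Finite) : IsCompact (emb.drawing S) := by
  refine (hS.image _).isCompact.union (hS.isCompact_biUnion fun u _ ↦
    hS.isCompact_biUnion fun v _ ↦ isCompact_iUnion fun h ↦ ?_)
  obtain ⟨f, -, hf⟩ := emb.arc_isArc h
  exact hf ▸ isCompact_range f.continuous

theorem notMem_drawing_of_mem_arc {u v : V} (h : G.Adj u v) (hu : u ∉ T) (hv : v ∉ T)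
    {x : ℝ × ℝ} (hx : x ∈ emb.arc h) : x ∉ emb.drawing T := by
  rw [mem_drawing]
  rintro (⟨w, hw, rfl⟩ | ⟨w, hw, z, hz, h', hx'⟩)
  · rcases emb.arc_vertex h w hx with rfl | rfl
    exacts [hu hw, hv hw]
  · have hne : s(u, v) ≠ s(w, z) := fun e ↦ by
      rcases Sym2.eq_iff.1 e with ⟨rfl, -⟩ | ⟨rfl, -⟩
      exacts [hu hw, hu hz]
    obtain ⟨t, ⟨rfl | rfl, rfl | rfl⟩, -⟩ := emb.arc_inter h h' hne ⟨hx, hx'⟩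
    exacts [hu hw, hu hz, hv hw, hv hz]

theorem vpos_mem_drawing_iff {v : V} : emb.vpos v ∈ emb.drawing S ↔ v ∈ S := by
  refine ⟨fun h ↦ ?_, emb.vpos_mem_drawing⟩
  rcases emb.mem_drawing.1 h with ⟨u, hu, huv⟩ | ⟨u, hu, w, hw, h, hx⟩
  · exact emb.vinj huv ▸ hu
  · rcases emb.arc_vertex h v hx with rfl | rfl
    exacts [hu, hw]

theorem disjoint_drawing (hST : Disjoint S T) : Disjoint (emb.drawing S) (emb.drawing T) := by
  refine Set.disjoint_left.2 fun x hx ↦ ?_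
  rcases emb.mem_drawing.1 hx with ⟨u, hu, rfl⟩ | ⟨u, hu, v, hv, h, hx⟩
  · exact fun hT ↦ hST.notMem_of_mem_left hu (emb.vpos_mem_drawing_iff.1 hT)
  · exact emb.notMem_drawing_of_mem_arc h (hST.notMem_of_mem_left hu)
      (hST.notMem_of_mem_left hv) hx

theorem joinedIn_drawing (hS : (G.induce S).Preconnected) {u v : V} (hu : u ∈ S) (hv : v ∈ S) :
    JoinedIn (emb.drawing S) (emb.vpos u) (emb.vpos v) := by
  obtain ⟨p⟩ := hS ⟨u, hu⟩ ⟨v, hv⟩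
  suffices ∀ {a b : S}, (G.induce S).Walk a b →
      JoinedIn (emb.drawing S) (emb.vpos a) (emb.vpos b) from this p
  intro a b p
  induction p with
  | nil => exact JoinedIn.refl (emb.vpos_mem_drawing (Subtype.prop _))
  | @cons a b _ h _ ih =>
    exact ((emb.joinedIn_arc h).mono (emb.arc_subset_drawing h a.2 b.2)).trans ih

theorem finite_boundaryEdges {F : Set (ℝ × ℝ)} (hF : {v | emb.vpos v ∈ closure F}.Finite) :
    (emb.boundaryEdges F).Finite := by
  refine ((hF.prod hF).image fun x ↦ s(x.1, x.2)).subset ?_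
  rintro _ ⟨u, v, h, rfl, hsub⟩
  exact ⟨(u, v), ⟨hsub (emb.vpos_mem_arc_left h), hsub (emb.vpos_mem_arc_right h)⟩, rfl⟩

end PlanarEmbedding

/-- A `K₃,₃` minor of `G` with branch sets `R 0, R 1, R 2` and `D 0, D 1, D 2`, except that the
edge between `R 0` and `D 0` is not required. The branch set `D 0` is cofinite and the other ones
are finite, so that the drawing of everything except `R 0` and `D 0` is compact. -/
structure IsK33MinorMinusEdge (G : SimpleGraph V) (R D : Fin 3 → Set V) : Prop where
  disjoint_left : Pairwise (Function.onFun Disjoint R)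
  disjoint_right : Pairwise (Function.onFun Disjoint D)
  disjoint : ∀ i j, Disjoint (R i) (D j)
  connected : ∀ i j, (i, j) ≠ (0, 0) → (G.induce (R i ∪ D j)).Connected
  nonempty_left : ∀ i, (R i).Nonempty
  nonempty_right : ∀ j, (D j).Nonempty
  finite_left : ∀ i, (R i).Finite
  finite_right : ∀ j ≠ 0, (D j).Finite
  cofinite : (D 0)ᶜ.Finite

theorem exists_apply_eq_and_forall_mem {ι α : Type*} {R : ι → Set α} (hR : ∀ i, (R i).Nonempty)
    {i₀ : ι} {v : α} (hv : v ∈ R i₀) : ∃ p : ι → α, p i₀ = v ∧ ∀ i, p i ∈ R i := by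
  classical
  choose r hr using hR
  refine ⟨Function.update r i₀ v, Function.update_self .., fun i ↦ ?_⟩
  rcases eq_or_ne i i₀ with rfl | hi
  · rwa [Function.update_self]
  · rw [Function.update_of_ne hi]
    exact hr i

namespace IsK33MinorMinusEdge

variable {R D : Fin 3 → Set V}

theorem image (h : IsK33MinorMinusEdge G R D) (α : G ≃g G) :
    IsK33MinorMinusEdge G (fun i ↦ α '' R i) (fun j ↦ α '' D j) where
  disjoint_left _ _ hik := (Set.disjoint_image_iff α.injective).2 (h.disjoint_left hik)
  disjoint_right _ _ hjl := (Set.disjoint_image_iff α.injective).2 (h.disjoint_right hjl)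
  disjoint i j := (Set.disjoint_image_iff α.injective).2 (h.disjoint i j)
  connected i j hij := by
    rw [← Set.image_union]
    exact connected_induce_image α.toHom (h.connected i j hij)
  nonempty_left i := (h.nonempty_left i).image _
  nonempty_right j := (h.nonempty_right j).image _
  finite_left i := (h.finite_left i).image _
  finite_right j hj := (h.finite_right j hj).image _
  cofinite := by
    rw [← Set.image_compl_eq α.bijective]
    exact h.cofinite.image _

theorem disjoint_union (h : IsK33MinorMinusEdge G R D) {i j k l : Fin 3} (hik : i ≠ k)
    (hjl : j ≠ l) : Disjoint (R i ∪ D j) (R k ∪ D l) := by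
  simp only [Set.disjoint_union_left, Set.disjoint_union_right]
  exact ⟨⟨h.disjoint_left hik, (h.disjoint k j).symm⟩, h.disjoint i l, h.disjoint_right hjl⟩

/-- A path through `F` from `v` to `w` would supply the missing edge of `K₃,₃`. -/
theorem notMem_closure (h : IsK33MinorMinusEdge G R D) (emb : PlanarEmbedding G)
    {F : Set (ℝ × ℝ)} (hF : IsPreconnected F) (hFemb : Disjoint F emb.image) {v w : V}
    (hv : v ∈ R 0) (hw : w ∈ D 0) (hvF : emb.vpos v ∈ closure F) :
    emb.vpos w ∉ closure F := by
  intro hwF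
  let B (i j : Fin 3) : Set (ℝ × ℝ) := emb.drawing (R i ∪ D j)
  have hB {i j k l : Fin 3} (hik : i ≠ k) (hjl : j ≠ l) : Disjoint (B i j) (B k l) :=
    emb.disjoint_drawing (h.disjoint_union hik hjl)
  let K : Set (ℝ × ℝ) := ⋃ (i ∈ ({0}ᶜ : Set (Fin 3))) (j ∈ ({0}ᶜ : Set (Fin 3))), B i j
  have hBK {i j : Fin 3} (hi : i ≠ 0) (hj : j ≠ 0) : B i j ⊆ K :=
    Set.subset_biUnion_of_mem (u := fun i ↦ ⋃ j ∈ ({0}ᶜ : Set (Fin 3)), B i j) hi |>.trans' <|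
      Set.subset_biUnion_of_mem (u := fun j ↦ B i j) hj
  have hK : IsCompact K := (Set.toFinite _).isCompact_biUnion fun i _ ↦
    (Set.toFinite _).isCompact_biUnion fun j hj ↦
      emb.isCompact_drawing ((h.finite_left i).union (h.finite_right j hj))
  have hFK : Disjoint F K := hFemb.mono_right <| Set.iUnion₂_subset fun _ _ ↦
    Set.iUnion₂_subset fun _ _ ↦ emb.drawing_subset_image
  have hB₀ : Disjoint (B 0 0) K := by
    simp only [K, Set.disjoint_iUnion_right]
    exact fun i hi j hj ↦ hB (Ne.symm hi) (Ne.symm hj)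
  have hvw : JoinedIn Kᶜ (emb.vpos v) (emb.vpos w) :=
    joinedIn_compl_of_mem_closure hF hK.isClosed hFK hvF hwF
      (hB₀.notMem_of_mem_left (emb.vpos_mem_drawing (Or.inl hv)))
      (hB₀.notMem_of_mem_left (emb.vpos_mem_drawing (Or.inr hw)))
  obtain ⟨p, rfl, hp⟩ := exists_apply_eq_and_forall_mem h.nonempty_left hv
  obtain ⟨q, rfl, hq⟩ := exists_apply_eq_and_forall_mem h.nonempty_right hw
  obtain ⟨i, j, k, l, hik, hjl, hmeet⟩ := exists_not_disjoint_of_joinedIn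
    (p := emb.vpos ∘ p) (q := emb.vpos ∘ q) (E := fun i j ↦ if (i, j) = (0, 0) then Kᶜ else B i j)
    fun i j ↦ by
      split_ifs with hij
      · obtain ⟨rfl, rfl⟩ := Prod.mk.inj hij
        exact hvw
      · exact emb.joinedIn_drawing (h.connected i j hij).preconnected (Or.inl (hp i))
          (Or.inr (hq j))
  refine hmeet ?_
  split_ifs with hij hkl hkl <;> simp only [Prod.mk.injEq] at *
  · exact absurd (hij.1.trans hkl.1.symm) hik
  · exact Set.disjoint_compl_left_iff_subset.2 (hBK (by grind) (by grind))
  · exact Set.disjoint_compl_right_iff_subset.2 (hBK (by grind) (by grind))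
  · exact hB hik hjl

theorem finite_setOf_vpos_mem_closure (h : IsK33MinorMinusEdge G R D)
    (htrans : ∀ u v : V, ∃ α : G ≃g G, α u = v) (emb : PlanarEmbedding G) {F : Set (ℝ × ℝ)}
    (hF : IsPreconnected F) (hFemb : Disjoint F emb.image) :
    {v | emb.vpos v ∈ closure F}.Finite := by
  by_contra hinf
  obtain ⟨v, hv⟩ := Set.Infinite.nonempty hinf
  obtain ⟨u, hu⟩ := h.nonempty_left 0
  obtain ⟨α, rfl⟩ := htrans u v
  obtain ⟨w, hw, hwD⟩ := Set.Infinite.exists_notMem_finite hinf (h.image α).cofinite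
  exact (h.image α).notMem_closure emb hF hFemb ⟨u, hu, rfl⟩ (not_not.1 hwD) hv hw

end IsK33MinorMinusEdge

end PlanarDrawing

section Components

variable {V : Type*} {G : SimpleGraph V}

theorem exists_adj_of_not_subset {S T : Set V} (hS : (G.induce S).Preconnected)
    (hne : (S ∩ T).Nonempty) (hST : ¬ S ⊆ T) : ∃ x ∈ S ∩ T, ∃ y ∈ S \ T, G.Adj x y := by
  obtain ⟨a, haS, haT⟩ := hne
  obtain ⟨b, hbS, hbT⟩ := Set.not_subset.1 hST
  obtain ⟨p⟩ := hS ⟨a, haS⟩ ⟨b, hbS⟩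
  obtain ⟨d, -, hd₁, hd₂⟩ := p.exists_boundary_dart (Subtype.val ⁻¹' T) haT hbT
  exact ⟨d.fst, ⟨d.fst.2, hd₁⟩, d.snd, ⟨d.snd.2, hd₂⟩, d.adj⟩

theorem connected_induce_componentCompl {K : Set V} (C : G.ComponentCompl K) :
    (G.induce (C : Set V)).Connected := by
  have hC : (C : Set V) = Subtype.val '' ConnectedComponent.supp C := by
    ext v
    simp [ComponentCompl.mem_supp_iff, componentComplMk]
  rw [hC]
  exact connected_induce_image (Embedding.induce Kᶜ).toHom
    (ConnectedComponent.connected_toSimpleGraph C)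

theorem subset_componentCompl {S K : Set V} (hS : (G.induce S).Preconnected)
    (hSK : Disjoint S K) {C : G.ComponentCompl K} (hne : (S ∩ C).Nonempty) : S ⊆ C := by
  by_contra h
  obtain ⟨x, hx, y, hy, hxy⟩ := exists_adj_of_not_subset hS hne h
  exact hy.2 (C.mem_of_adj x y hx.2 (hSK.notMem_of_mem_left hy.1) hxy)

theorem connected_induce_compl_componentCompl (hG : G.Preconnected) {S : Set V}
    (hS : (G.induce S).Connected) (D : G.ComponentCompl S) :
    (G.induce (D : Set V)ᶜ).Connected := by
  obtain ⟨u, hu⟩ := hS.nonempty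
  have hSD : S ⊆ (D : Set V)ᶜ := D.disjoint_right.subset_compl_right
  refine induce_connected_of_patches u (hSD hu) fun {v} hv ↦ ?_
  by_cases hvS : v ∈ S
  · exact ⟨S, hSD, hu, hvS, hS.preconnected _ _⟩
  · let D' := G.componentComplMk hvS
    have hvD' : v ∈ D' := componentComplMk_mem G hvS
    have hD'D : D' ≠ D := fun h ↦ hv (h ▸ hvD')
    obtain ⟨⟨c, s⟩, hc, hs, hcs⟩ := D'.exists_adj_boundary_pair hG ⟨u, hu⟩
    refine ⟨S ∪ D', Set.union_subset hSD
      (ComponentCompl.pairwise_disjoint hD'D).subset_compl_right, Or.inl hu, Or.inr hvD', ?_⟩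
    exact (connected_induce_union hS.preconnected
      (connected_induce_componentCompl D').preconnected hs hc hcs.symm).preconnected _ _

theorem OneEnded.infinite (hone : OneEnded G) : Infinite V := by
  obtain ⟨C, hC, -⟩ := hone ∅
  exact Set.infinite_univ_iff.1 (hC.mono (Set.subset_univ _))

theorem OneEnded.exists_infinite_componentCompl (hone : OneEnded G) {K : Set V}
    (hK : K.Finite) : ∃ C : G.ComponentCompl K, (C : Set V).Infinite := by
  lift K to Finset V using hK
  exact (hone K).exists

theorem OneEnded.preconnected (hone : OneEnded G)
    (htrans : ∀ u v : V, ∃ α : G ≃g G, α u = v) : G.Preconnected := by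
  obtain ⟨C, hC, hunique⟩ := hone ∅
  have hmem : ∀ v, v ∈ C := by
    intro v
    obtain ⟨c, hc⟩ := C.nonempty
    obtain ⟨α, rfl⟩ := htrans c v
    let D : G.ComponentCompl ((∅ : Finset V) : Set V) :=
      G.componentComplMk (v := α c) (by simp)
    have hcD : α c ∈ D := componentComplMk_mem G _
    have hsub : α '' C ⊆ D := subset_componentCompl
      (connected_induce_image α.toHom (connected_induce_componentCompl C)).preconnected
      (by simp) ⟨α c, ⟨c, hc, rfl⟩, hcD⟩
    have hD : D.supp.Infinite := (hC.image α.injective.injOn).mono hsub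
    exact hunique D hD ▸ hcD
  have huniv : (C : Set V) = Set.univ := Set.eq_univ_of_forall hmem
  have hconn := connected_induce_componentCompl C
  rw [huniv] at hconn
  exact (induceUnivIso G).connected_iff.1 hconn |>.preconnected

theorem OneEnded.finite_compl_componentCompl [G.LocallyFinite] (hone : OneEnded G)
    (hG : G.Preconnected) {K : Set V} (hK : K.Finite) {C : G.ComponentCompl K}
    (hC : (C : Set V).Infinite) : (C : Set V)ᶜ.Finite := by
  lift K to Finset V using hK
  have : Fact G.Preconnected := ⟨hG⟩
  have hfin : (⋃ D : {D : G.ComponentCompl (K : Set V) // D ≠ C}, (D.1 : Set V)).Finite :=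
    Set.finite_iUnion fun D ↦ by
      by_contra hD
      exact D.2 ((hone K).unique hD hC)
  refine (K.finite_toSet.union hfin).subset fun x hx ↦ ?_
  by_cases hxK : x ∈ (K : Set V)
  · exact Or.inl hxK
  · have hxD := componentComplMk_mem G hxK
    exact Or.inr (Set.mem_iUnion.2 ⟨⟨G.componentComplMk hxK, fun h ↦ hx (h ▸ hxD)⟩, hxD⟩)

end Components

section Traps

variable {V : Type*} {G : SimpleGraph V}

/-- The set `T` separates `A` from infinity: `A` misses the infinite components of `G - T`. -/
def SeparatesFromInfinity (G : SimpleGraph V) (A T : Set V) : Prop :=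
  ∀ C : G.ComponentCompl T, (C : Set V).Infinite → Disjoint A C

/-- The inner vertex boundary: the vertices of `E` that have a neighbour outside `E`. -/
def innerBoundary (G : SimpleGraph V) (E : Set V) : Set V :=
  {x ∈ E | ∃ y ∉ E, G.Adj x y}

theorem innerBoundary_image (α : G ≃g G) (E : Set V) :
    innerBoundary G (α '' E) = α '' innerBoundary G E := by
  ext x
  obtain ⟨x, rfl⟩ := α.surjective x
  have h : (∃ y ∉ α '' E, G.Adj (α x) y) ↔ ∃ y ∉ E, G.Adj x y :=
    α.surjective.exists.trans (by simp only [α.injective.mem_set_image, α.map_adj_iff])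
  rw [α.injective.mem_set_image]
  exact and_congr α.injective.mem_set_image h

theorem innerBoundary_nonempty (hG : G.Preconnected) {E : Set V} (hE : E.Nonempty)
    (hEc : Eᶜ.Nonempty) : (innerBoundary G E).Nonempty := by
  obtain ⟨a, ha⟩ := hE
  obtain ⟨b, hb⟩ := hEc
  obtain ⟨p⟩ := hG a b
  obtain ⟨d, -, hd₁, hd₂⟩ := p.exists_boundary_dart E ha hb
  exact ⟨d.fst, hd₁, d.snd, hd₂, d.adj⟩

/-- A large finite piece of the graph behind a bottleneck of fewer than `k` vertices: both it and
its complement are connected. -/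
structure IsTrap (G : SimpleGraph V) (k n : ℕ) (E : Set V) : Prop where
  finite : E.Finite
  le_ncard : n ≤ E.ncard
  connected : (G.induce E).Connected
  connected_compl : (G.induce Eᶜ).Connected
  ncard_innerBoundary_lt : (innerBoundary G E).ncard < k

theorem IsTrap.image {k n : ℕ} {E : Set V} (hE : IsTrap G k n E) (α : G ≃g G) :
    IsTrap G k n (α '' E) where
  finite := hE.finite.image _
  le_ncard := by
    rw [Set.ncard_image_of_injective _ α.injective]
    exact hE.le_ncard
  connected := connected_induce_image α.toHom hE.connected
  connected_compl := by
    rw [← Set.image_compl_eq α.bijective]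
    exact connected_induce_image α.toHom hE.connected_compl
  ncard_innerBoundary_lt := by
    rw [innerBoundary_image, Set.ncard_image_of_injective _ α.injective]
    exact hE.ncard_innerBoundary_lt

theorem OneEnded.exists_isTrap [G.LocallyFinite] (hone : OneEnded G) (hG : G.Preconnected)
    {k : ℕ} (hsep : ∀ A : Set V, A.Finite → ∃ T : Finset V, T.card < k ∧
      SeparatesFromInfinity G A T) (n : ℕ) : ∃ E, IsTrap G k n E := by
  have := hone.infinite
  obtain ⟨A₀, hA₀⟩ := Infinite.exists_subset_card_eq V (n + 1)
  obtain ⟨A, hA₀A, hA⟩ := extend_finset_to_connected hG (t := A₀) (Finset.card_pos.1 (by lia))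
  obtain ⟨T, hT, hAT⟩ := hsep A A.finite_toSet
  obtain ⟨C, hC⟩ := hone.exists_infinite_componentCompl T.finite_toSet
  have hAC : Disjoint (A : Set V) C := hAT C hC
  obtain ⟨a, ha⟩ := hA.nonempty
  let D := G.componentComplMk (hAC.notMem_of_mem_left ha)
  have hAD : (A : Set V) ⊆ D :=
    subset_componentCompl hA.preconnected hAC ⟨a, ha, componentComplMk_mem G _⟩
  have hD : (D : Set V).Finite :=
    (hone.finite_compl_componentCompl hG T.finite_toSet hC).subset
      D.disjoint_right.subset_compl_left
  have hDT : innerBoundary G D ⊆ T := by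
    rintro x ⟨hx, y, hy, hxy⟩
    have hyC : y ∈ C := by
      by_contra h
      exact hy (D.mem_of_adj x y hx h hxy)
    by_contra hxT
    exact D.notMem_of_mem hx (C.mem_of_adj y x hyC hxT hxy.symm)
  refine ⟨D, hD, ?_, connected_induce_componentCompl D,
    connected_induce_compl_componentCompl hG (connected_induce_componentCompl C) D, ?_⟩
  · calc n ≤ A₀.card := by lia
      _ ≤ A.card := Finset.card_le_card hA₀A
      _ = (A : Set V).ncard := (Set.ncard_coe_finset A).symm
      _ ≤ (D : Set V).ncard := Set.ncard_le_ncard hAD hD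
  · calc (innerBoundary G D).ncard ≤ (T : Set V).ncard :=
          Set.ncard_le_ncard hDT T.finite_toSet
      _ < k := by rwa [Set.ncard_coe_finset]

/-- The limit of a sequence of sets along an ultrafilter. -/
def ultralimit (U : Ultrafilter ℕ) (E : ℕ → Set V) : Set V :=
  {x | ∀ᶠ n in U, x ∈ E n}

theorem ultralimit_compl (U : Ultrafilter ℕ) (E : ℕ → Set V) :
    ultralimit U (fun n ↦ (E n)ᶜ) = (ultralimit U E)ᶜ := by
  ext x
  exact Ultrafilter.eventually_not

theorem innerBoundary_ultralimit [G.LocallyFinite] (U : Ultrafilter ℕ) (E : ℕ → Set V) :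
    innerBoundary G (ultralimit U E) = ultralimit U fun n ↦ innerBoundary G (E n) := by
  ext x
  have hy : (∃ y ∉ ultralimit U E, G.Adj x y) ↔ ∀ᶠ n in U, ∃ y ∉ E n, G.Adj x y := by
    have h := U.eventually_exists_mem_iff (P := fun y n ↦ y ∉ E n) (Set.toFinite (G.neighborSet x))
    simp only [mem_neighborSet, Ultrafilter.eventually_not] at h
    simp only [and_comm (b := G.Adj _ _)]
    exact h.symm
  exact (and_congr_right' hy).trans Filter.eventually_and.symm

theorem finite_ultralimit {U : Ultrafilter ℕ} {E : ℕ → Set V} {k : ℕ}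
    (hE : ∀ n, (E n).Finite) (hk : ∀ n, (E n).ncard ≤ k) : (ultralimit U E).Finite := by
  by_contra hinf
  obtain ⟨t, ht, hcard⟩ := Set.Infinite.exists_subset_card_eq hinf (k + 1)
  obtain ⟨n, hn⟩ := ((Filter.eventually_all_finset t).2 fun x hx ↦ ht hx).exists
  have := Set.ncard_le_ncard (show (t : Set V) ⊆ E n from hn) (hE n)
  rw [Set.ncard_coe_finset] at this
  have := hk n
  lia

theorem eventually_subset_ultralimit [G.LocallyFinite] {U : Ultrafilter ℕ} {E : ℕ → Set V}
    (hE : ∀ n, (G.induce (E n)).Preconnected) (hfin : (ultralimit U E).Finite)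
    (hne : (ultralimit U E).Nonempty) : ∀ᶠ n in U, E n ⊆ ultralimit U E := by
  set L := ultralimit U E
  have hN : (⋃ x ∈ L, G.neighborSet x).Finite := hfin.biUnion fun x _ ↦ Set.toFinite _
  have hL : ∀ᶠ n in U, ∀ x ∈ L, x ∈ E n := (Filter.eventually_all_finite hfin).2 fun _ hx ↦ hx
  have hLN : ∀ᶠ n in U, ∀ y ∈ (⋃ x ∈ L, G.neighborSet x) \ L, y ∉ E n :=
    (Filter.eventually_all_finite (hN.subset Set.sdiff_subset)).2 fun y hy ↦
      Ultrafilter.eventually_not.2 hy.2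
  filter_upwards [hL, hLN] with n hn hn'
  by_contra hsub
  obtain ⟨z, hz⟩ := hne
  obtain ⟨x, ⟨-, hxL⟩, y, ⟨hyE, hyL⟩, hxy⟩ :=
    exists_adj_of_not_subset (hE n) ⟨z, hn z hz, hz⟩ hsub
  exact hn' y ⟨Set.mem_biUnion hxL hxy, hyL⟩ hyE

/-- The limit of the traps would have a finite boundary, hence be finite or cofinite. In either
case the traps would converge to it eventually. -/
theorem OneEnded.exists_forall_not_isTrap [G.LocallyFinite] (hone : OneEnded G)
    (hG : G.Preconnected) (k : ℕ) (o : V) :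
    ∃ n, ∀ E, o ∈ innerBoundary G E → ¬ IsTrap G k n E := by
  have := hone.infinite
  by_contra! h
  choose E hoE hE using h
  set U : Ultrafilter ℕ := Filter.hyperfilter ℕ
  set L := ultralimit U E with hL
  obtain ⟨hoL, y, hyL, -⟩ : o ∈ innerBoundary G L := by
    rw [innerBoundary_ultralimit]
    exact Filter.Eventually.of_forall hoE
  have hfin : (innerBoundary G L).Finite := by
    rw [innerBoundary_ultralimit]
    exact finite_ultralimit (fun n ↦ (hE n).finite.subset fun _ hx ↦ hx.1)
      fun n ↦ (hE n).ncard_innerBoundary_lt.le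
  obtain ⟨C, hC⟩ := hone.exists_infinite_componentCompl hfin
  have hCc := hone.finite_compl_componentCompl hG hfin hC
  by_cases hne : ((C : Set V) ∩ L).Nonempty
  · have hCL : (C : Set V) ⊆ L := by
      by_contra hsub
      obtain ⟨x, hx, y, hy, hxy⟩ :=
        exists_adj_of_not_subset (connected_induce_componentCompl C).preconnected hne hsub
      exact C.notMem_of_mem hx.1 ⟨hx.2, y, hy.2, hxy⟩
    have hLc : Lᶜ.Finite := hCc.subset (Set.compl_subset_compl.2 hCL)
    rw [hL, ← ultralimit_compl] at hLc
    obtain ⟨n, hn⟩ := (eventually_subset_ultralimit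
      (fun n ↦ (hE n).connected_compl.preconnected) hLc
      ⟨y, by rwa [ultralimit_compl]⟩).exists
    exact (hE n).finite.infinite_compl (hLc.subset hn)
  · have hLfin : L.Finite := hCc.subset fun x hx hxC ↦ hne ⟨x, hxC, hx⟩
    have hlarge : ∀ᶠ n in U, L.ncard < n :=
      Nat.hyperfilter_le_atTop (Filter.eventually_gt_atTop _)
    obtain ⟨n, hn, hlt⟩ := ((eventually_subset_ultralimit
      (fun n ↦ (hE n).connected.preconnected) hLfin ⟨o, hoL⟩).and hlarge).exists
    exact ((hE n).le_ncard.trans (Set.ncard_le_ncard hn hLfin)).not_gt hlt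

theorem OneEnded.exists_finite_not_separatesFromInfinity [G.LocallyFinite] (hone : OneEnded G)
    (htrans : ∀ u v : V, ∃ α : G ≃g G, α u = v) (k : ℕ) :
    ∃ A : Set V, A.Finite ∧ ∀ T : Finset V, T.card < k → ¬ SeparatesFromInfinity G A T := by
  by_contra! hsep
  have := hone.infinite
  have hG := hone.preconnected htrans
  obtain ⟨o⟩ : Nonempty V := inferInstance
  obtain ⟨n, hn⟩ := hone.exists_forall_not_isTrap hG k o
  obtain ⟨E, hE⟩ := hone.exists_isTrap hG hsep n
  obtain ⟨x, hx⟩ := innerBoundary_nonempty hG (Set.nonempty_coe_sort.1 hE.connected.nonempty)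
    (Set.nonempty_coe_sort.1 hE.connected_compl.nonempty)
  obtain ⟨α, rfl⟩ := htrans x o
  exact hn (α '' E) (innerBoundary_image α E ▸ ⟨x, hx, rfl⟩) (hE.image α)

end Traps

section Menger

variable {V : Type*} {G H : SimpleGraph V} {A B S : Set V} {k : ℕ} {e : Sym2 V}

theorem exists_walk_forall_mem_support_imp_eq {a b : V} (p : G.Walk a b) {T : Set V}
    (hb : b ∈ T) : ∃ c ∈ T, ∃ q : G.Walk a c, q.support ⊆ p.support ∧
      ∀ z ∈ q.support, z ∈ T → z = c := by
  classical
  obtain ⟨c, hc, hcp, hcT⟩ := p.exists_mem_support_forall_mem_support_imp_eq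
    {z ∈ p.support.toFinset | z ∈ T} ⟨b, by simp [hb]⟩
  have hsub := p.support_takeUntil_subset_support hcp
  refine ⟨c, (Finset.mem_filter.1 hc).2, p.takeUntil c hcp, hsub, fun z hz hzT ↦ hcT z ?_ hz⟩
  exact Finset.mem_filter.2 ⟨List.mem_toFinset.2 (hsub hz), hzT⟩

theorem exists_walk_forall_mem_support_or {a b c d : V} (p : G.Walk a c) (q : G.Walk b d)
    (h : c = d ∨ G.Adj c d) :
    ∃ w : G.Walk a b, ∀ z ∈ w.support, z ∈ p.support ∨ z ∈ q.support := by
  rcases h with rfl | h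
  · exact ⟨p.append q.reverse, by simp [Walk.mem_support_append_iff]⟩
  · refine ⟨p.append (.cons h q.reverse), fun z hz ↦ ?_⟩
    rw [Walk.mem_support_append_iff, Walk.support_cons, List.mem_cons, Walk.support_reverse,
      List.mem_reverse] at hz
    rcases hz with hz | rfl | hz
    exacts [Or.inl hz, Or.inl p.end_mem_support, Or.inr hz]

/-- There are `k` pairwise disjoint walks from `A` to `B`. -/
def IsLinked (G : SimpleGraph V) (k : ℕ) (A B : Set V) : Prop :=
  ∃ (a b : Fin k → V) (p : ∀ i, G.Walk (a i) (b i)), (∀ i, a i ∈ A) ∧ (∀ i, b i ∈ B) ∧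
    Pairwise (Function.onFun List.Disjoint fun i ↦ (p i).support)

/-- Every walk from `A` to `B` meets `S`. -/
def Separates (G : SimpleGraph V) (A B S : Set V) : Prop :=
  ∀ a ∈ A, ∀ b ∈ B, ∀ p : G.Walk a b, ∃ z ∈ p.support, z ∈ S

/-- The vertices that can be reached from `A` in `G - S`. -/
def reachableAvoiding (G : SimpleGraph V) (A S : Set V) : Set V :=
  {z | ∃ a ∈ A, ∃ p : G.Walk a z, ∀ u ∈ p.support, u ∉ S}

theorem IsLinked.mono (hHG : H ≤ G) (h : IsLinked H k A B) : IsLinked G k A B := by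
  obtain ⟨a, b, p, ha, hb, hp⟩ := h
  refine ⟨a, b, fun i ↦ (p i).mapLe hHG, ha, hb, ?_⟩
  simpa only [Walk.support_mapLe_eq_support] using hp

theorem Separates.symm (h : Separates G A B S) : Separates G B A S := by
  intro b hb a ha p
  simpa using h a ha b hb p.reverse

theorem disjoint_reachableAvoiding_right : Disjoint (reachableAvoiding G A S) S :=
  Set.disjoint_left.2 fun _ ⟨_, _, p, hp⟩ ↦ hp _ p.end_mem_support

theorem mem_reachableAvoiding_of_adj {u v : V} (hu : u ∈ reachableAvoiding G A S)
    (huv : G.Adj u v) (hv : v ∉ S) : v ∈ reachableAvoiding G A S := by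
  obtain ⟨a, ha, p, hp⟩ := hu
  refine ⟨a, ha, p.concat huv, fun z hz ↦ ?_⟩
  rw [Walk.support_concat, List.mem_append, List.mem_singleton] at hz
  rcases hz with hz | rfl
  exacts [hp z hz, hv]

theorem Separates.disjoint_reachableAvoiding (h : Separates G A B S) :
    Disjoint (reachableAvoiding G A S) (reachableAvoiding G B S) := by
  refine Set.disjoint_left.2 ?_
  rintro z ⟨a, ha, p, hp⟩ ⟨b, hb, q, hq⟩
  obtain ⟨w, hw⟩ := exists_walk_forall_mem_support_or p q (.inl rfl)
  obtain ⟨x, hx, hxS⟩ := h a ha b hb w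
  rcases hw x hx with hx | hx
  exacts [hp x hx hxS, hq x hx hxS]

theorem Separates.disjoint_reachableAvoiding_right (h : Separates G A B S) :
    Disjoint (reachableAvoiding G A S) B := by
  refine Set.disjoint_left.2 ?_
  rintro b ⟨a, ha, p, hp⟩ hb
  obtain ⟨z, hz, hzS⟩ := h a ha b hb p
  exact hp z hz hzS

theorem exists_mem_reachableAvoiding_deleteEdges {a b : V} (p : G.Walk a b) (ha : a ∈ A)
    (hp : ∀ z ∈ p.support, z ∉ S) (hb : b ∉ reachableAvoiding (G.deleteEdges {e}) A S) :
    ∃ x ∈ reachableAvoiding (G.deleteEdges {e}) A S, x ∈ e := by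
  obtain ⟨d, hd, hd₁, hd₂⟩ := p.exists_boundary_dart (reachableAvoiding (G.deleteEdges {e}) A S)
    ⟨a, ha, .nil, by simpa using hp a p.start_mem_support⟩ hb
  have hde : s(d.fst, d.snd) = e := by
    by_contra hne
    exact hd₂ (mem_reachableAvoiding_of_adj hd₁ (deleteEdges_adj.2 ⟨d.adj, hne⟩)
      (hp _ (p.dart_snd_mem_support_of_mem_darts hd)))
  exact ⟨d.fst, hd₁, hde ▸ Sym2.mem_mk_left _ _⟩

theorem Separates.exists_eq_mk (h : Separates (G.deleteEdges {e}) A B S)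
    (hG : ¬ Separates G A B S) : ∃ x ∈ reachableAvoiding (G.deleteEdges {e}) A S,
      ∃ y ∈ reachableAvoiding (G.deleteEdges {e}) B S, e = s(x, y) := by
  simp only [Separates, not_forall, not_exists, not_and] at hG
  obtain ⟨a, ha, b, hb, p, hp⟩ := hG
  obtain ⟨x, hx, hxe⟩ := exists_mem_reachableAvoiding_deleteEdges p ha hp
    (h.disjoint_reachableAvoiding_right.notMem_of_mem_right hb)
  obtain ⟨y, hy, hye⟩ := exists_mem_reachableAvoiding_deleteEdges p.reverse hb
    (by simpa using hp) (h.symm.disjoint_reachableAvoiding_right.notMem_of_mem_right ha)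
  have hxy : x ≠ y := h.disjoint_reachableAvoiding.ne_of_mem hx hy
  exact ⟨x, hx, y, hy, (Sym2.mem_and_mem_iff hxy).1 ⟨hxe, hye⟩⟩

/-- Truncating a walk of `G` the first time it leaves the part of `G - S - xy` reachable from `A`,
or hits `x`, turns it into a walk of `G - xy`. -/
theorem exists_walk_deleteEdges {x y : V} (hxy : x ≠ y) (he : e = s(x, y))
    (hy : y ∉ reachableAvoiding (G.deleteEdges {e}) A S) {a b : V} (p : G.Walk a b) (ha : a ∈ A)
    (hb : b ∉ reachableAvoiding (G.deleteEdges {e}) A S ∨ b = x) :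
    ∃ c ∈ insert x S, ∃ q : (G.deleteEdges {e}).Walk a c, q.support ⊆ p.support ∧
      ∀ z ∈ q.support, z = c ∨ z ∈ reachableAvoiding (G.deleteEdges {e}) A S := by
  set X := reachableAvoiding (G.deleteEdges {e}) A S
  obtain ⟨c, hc, q, hqp, hq⟩ := exists_walk_forall_mem_support_imp_eq p
    (T := {z | z ∉ X ∨ z = x}) hb
  have hqe : e ∉ q.edges := by
    rintro heq
    subst he
    exact hxy ((hq x (q.fst_mem_support_of_mem_edges heq) (.inr rfl)).trans
      (hq y (q.snd_mem_support_of_mem_edges heq) (.inl hy)).symm)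
  have hqX : ∀ z ∈ q.support, z = c ∨ z ∈ X := fun z hz ↦ by
    by_contra! h
    exact h.1 (hq z hz (.inl h.2))
  let q' := q.toDeleteEdge e hqe
  have hq' : q'.support = q.support := q.support_transfer _
  refine ⟨c, ?_, q', hq' ▸ hqp, hq' ▸ hqX⟩
  by_contra hcS
  obtain ⟨hcx, hcS⟩ := not_or.1 hcS
  refine hc.elim (fun hcX ↦ hcX ⟨a, ha, q', fun z hz ↦ ?_⟩) hcx
  rcases hqX z (hq' ▸ hz) with rfl | hzX
  exacts [hcS, disjoint_reachableAvoiding_right.notMem_of_mem_left hzX]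

theorem exists_disjoint_walks_deleteEdges {x y : V} (hxy : x ≠ y) (he : e = s(x, y))
    (hy : y ∉ reachableAvoiding (G.deleteEdges {e}) A S)
    (hB : Disjoint (reachableAvoiding (G.deleteEdges {e}) A S) B)
    (hsep : ∀ T : Finset V, T.card < k → ¬ Separates G A B T)
    (ih : ∀ A B : Set V, (∀ T : Finset V, T.card < k → ¬ Separates (G.deleteEdges {e}) A B T) →
      IsLinked (G.deleteEdges {e}) k A B) :
    ∃ (a c : Fin k → V) (p : ∀ i, G.Walk (a i) (c i)), (∀ i, a i ∈ A) ∧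
      (∀ i, c i ∈ insert x S) ∧ Pairwise (Function.onFun List.Disjoint fun i ↦ (p i).support) ∧
      ∀ i, ∀ z ∈ (p i).support, z = c i ∨ z ∈ reachableAvoiding (G.deleteEdges {e}) A S := by
  obtain ⟨a, b, p, ha, hb, hp⟩ := ih A (insert x S) fun T hT hTsep ↦ by
    refine hsep T hT fun a ha b hb p ↦ ?_
    obtain ⟨c, hc, q, hqp, -⟩ := exists_walk_deleteEdges hxy he hy p ha
      (.inl (hB.notMem_of_mem_right hb))
    obtain ⟨z, hz, hzT⟩ := hTsep a ha c hc q
    exact ⟨z, hqp hz, hzT⟩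
  have hle : G.deleteEdges {e} ≤ G := G.deleteEdges_le _
  choose c hc q hqp hq using fun i ↦
    exists_walk_deleteEdges hxy he hy ((p i).mapLe hle) (ha i) <|
      (hb i).symm.imp_left fun h ↦ disjoint_reachableAvoiding_right.notMem_of_mem_right h
  simp only [Walk.support_mapLe_eq_support] at hqp
  refine ⟨a, c, fun i ↦ (q i).mapLe hle, ha, hc, fun i j hij ↦ ?_, ?_⟩
  · simp only [Function.onFun, Walk.support_mapLe_eq_support]
    exact fun z hz hz' ↦ hp hij (hqp i hz) (hqp j hz')
  · simpa only [Walk.support_mapLe_eq_support] using hq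

theorem injective_of_pairwise_disjoint_support {ι : Type*} {a b : ι → V}
    {p : ∀ i, G.Walk (a i) (b i)}
    (hp : Pairwise (Function.onFun List.Disjoint fun i ↦ (p i).support)) :
    Function.Injective b := by
  intro i j hij
  by_contra hne
  exact hp hne (p i).end_mem_support (hij ▸ (p j).end_mem_support)

theorem exists_eq_of_mem_of_card_le {c : Fin k → V} (hc : Function.Injective c) {T : Finset V}
    (hT : T.card ≤ k) (hcT : ∀ i, c i ∈ T) {v : V} (hv : v ∈ T) : ∃ i, c i = v := by
  obtain ⟨i, -, hi⟩ := Finset.surjOn_of_injOn_of_card_le c (s := Finset.univ)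
    (fun i _ ↦ hcT i) hc.injOn (by simpa using hT) hv
  exact ⟨i, hi⟩

theorem isLinked_of_disjoint_walks {x y : V} (hxy : G.Adj x y) {S : Finset V} (hS : S.card < k)
    (hxS : x ∉ S) (hyS : y ∉ S) {a b c d : Fin k → V} {p : ∀ i, G.Walk (a i) (c i)}
    {q : ∀ i, G.Walk (b i) (d i)} (ha : ∀ i, a i ∈ A) (hb : ∀ i, b i ∈ B)
    (hc : ∀ i, c i ∈ insert x (S : Set V)) (hd : ∀ i, d i ∈ insert y (S : Set V))
    (hp : Pairwise (Function.onFun List.Disjoint fun i ↦ (p i).support))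
    (hq : Pairwise (Function.onFun List.Disjoint fun i ↦ (q i).support))
    (hpq : ∀ i j, ∀ z ∈ (p i).support, z ∈ (q j).support → z ∈ S ∧ z = c i ∧ z = d j) :
    IsLinked G k A B := by
  classical
  have hcinj := injective_of_pairwise_disjoint_support hp
  have hswap : ∀ z ∈ S, Equiv.swap x y z = z := fun z hz ↦
    Equiv.swap_apply_of_ne_of_ne (fun h ↦ hxS (h ▸ hz)) (fun h ↦ hyS (h ▸ hz))
  have hmatch : ∀ i, ∃ j, d j = Equiv.swap x y (c i) := fun i ↦ by
    refine exists_eq_of_mem_of_card_le (injective_of_pairwise_disjoint_support hq)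
      ((Finset.card_insert_le y S).trans hS) (by simpa using hd) (Finset.mem_insert.2 ?_)
    rcases hc i with hi | hi
    exacts [.inl (by rw [hi, Equiv.swap_apply_left]), .inr (by rwa [hswap _ hi])]
  choose m hm using hmatch
  have hminj : Function.Injective m := fun i j hij ↦
    hcinj ((Equiv.swap x y).injective (by rw [← hm, ← hm, hij]))
  have hw : ∀ i, ∃ w : G.Walk (a i) (b (m i)),
      ∀ z ∈ w.support, z ∈ (p i).support ∨ z ∈ (q (m i)).support := fun i ↦ by
    refine exists_walk_forall_mem_support_or (p i) (q (m i)) ?_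
    rw [hm]
    rcases hc i with hi | hi
    exacts [.inr (by rwa [hi, Equiv.swap_apply_left]), .inl (hswap _ hi).symm]
  choose w hw using hw
  have hcross : ∀ i j, i ≠ j → (p i).support.Disjoint (q (m j)).support := by
    intro i j hij z hz hz'
    obtain ⟨hzS, hzi, hzj⟩ := hpq i (m j) z hz hz'
    refine hij (hcinj (hzi.symm.trans ((Equiv.swap x y).injective ?_)))
    rw [← hm, ← hzj, hswap z hzS]
  refine ⟨a, b ∘ m, w, ha, fun i ↦ hb _, fun i j hij z hz hz' ↦ ?_⟩
  rcases hw i z hz with h | h <;> rcases hw j z hz' with h' | h'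
  exacts [hp hij h h', hcross i j hij h h', hcross j i hij.symm h' h, hq (hminj.ne hij) h h']

theorem isLinked_of_deleteEdges (he : e ∈ G.edgeSet)
    (hsep : ∀ T : Finset V, T.card < k → ¬ Separates G A B T)
    (ih : ∀ A B : Set V, (∀ T : Finset V, T.card < k → ¬ Separates (G.deleteEdges {e}) A B T) →
      IsLinked (G.deleteEdges {e}) k A B) : IsLinked G k A B := by
  by_cases hH : ∀ T : Finset V, T.card < k → ¬ Separates (G.deleteEdges {e}) A B T
  · exact (ih A B hH).mono (G.deleteEdges_le _)
  push Not at hH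
  obtain ⟨S, hS, hSsep⟩ := hH
  obtain ⟨x, hx, y, hy, hxy⟩ := hSsep.exists_eq_mk (hsep S hS)
  have hXY := hSsep.disjoint_reachableAvoiding
  have hXS := disjoint_reachableAvoiding_right (G := G.deleteEdges {e}) (A := A) (S := S)
  have hYS := disjoint_reachableAvoiding_right (G := G.deleteEdges {e}) (A := B) (S := S)
  have hne : x ≠ y := hXY.ne_of_mem hx hy
  obtain ⟨a, c, p, ha, hc, hpd, hp⟩ := exists_disjoint_walks_deleteEdges hne hxy
    (hXY.notMem_of_mem_right hy) hSsep.disjoint_reachableAvoiding_right hsep ih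
  obtain ⟨b, d, q, hb, hd, hqd, hq⟩ := exists_disjoint_walks_deleteEdges hne.symm
    (hxy.trans Sym2.eq_swap) (hXY.notMem_of_mem_left hx)
    hSsep.symm.disjoint_reachableAvoiding_right (fun T hT h ↦ hsep T hT h.symm) ih
  refine isLinked_of_disjoint_walks (G.mem_edgeSet.1 (hxy ▸ he)) hS (hXS.notMem_of_mem_left hx)
    (hYS.notMem_of_mem_left hy) ha hb hc hd hpd hqd fun i j z hz hz' ↦ ?_
  have hzX : z ∈ (S : Set V) ∨ z ∈ reachableAvoiding (G.deleteEdges {e}) A S := by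
    rcases hp i z hz with rfl | h
    · exact (hc i).symm.imp_right fun h : c i = x ↦ h ▸ hx
    · exact .inr h
  have hzY : z ∈ (S : Set V) ∨ z ∈ reachableAvoiding (G.deleteEdges {e}) B S := by
    rcases hq j z hz' with rfl | h
    · exact (hd j).symm.imp_right fun h : d j = y ↦ h ▸ hy
    · exact .inr h
  have hzS : z ∈ (S : Set V) := hzX.elim id fun hX ↦
    hzY.resolve_right (hXY.notMem_of_mem_left hX)
  exact ⟨hzS, (hp i z hz).resolve_right (hXS.notMem_of_mem_right hzS),
    (hq j z hz').resolve_right (hYS.notMem_of_mem_right hzS)⟩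

theorem isLinked_bot (hsep : ∀ T : Finset V, T.card < k → ¬ Separates (⊥ : SimpleGraph V) A B T) :
    IsLinked (⊥ : SimpleGraph V) k A B := by
  obtain ⟨T, hT, hTk⟩ : ∃ T : Finset V, (T : Set V) ⊆ A ∩ B ∧ T.card = k := by
    by_cases hinf : (A ∩ B).Infinite
    · exact hinf.exists_subset_card_eq k
    lift A ∩ B to Finset V using Set.not_infinite.1 hinf with I hI
    refine (Finset.exists_subset_card_eq (not_lt.1 fun hlt ↦ hsep I hlt ?_)).imp
      fun T hT ↦ ⟨mod_cast hT.1, hT.2⟩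
    rintro a ha b hb (_ | h)
    · exact ⟨a, by simp, hI ▸ ⟨ha, hb⟩⟩
    · exact h.elim
  let f := (T.equivFinOfCardEq hTk).symm
  refine ⟨fun i ↦ f i, fun i ↦ f i, fun _ ↦ .nil, fun i ↦ (hT (f i).2).1,
    fun i ↦ (hT (f i).2).2, fun i j hij ↦ ?_⟩
  simpa [Function.onFun, Subtype.ext_iff] using f.injective.ne hij.symm

/-- Menger's theorem, by Göring's induction on the number of edges. -/
theorem isLinked_of_forall_not_separates (hG : G.edgeSet.Finite)
    (hsep : ∀ T : Finset V, T.card < k → ¬ Separates G A B T) : IsLinked G k A B := by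
  induction hn : G.edgeSet.ncard generalizing G A B with
  | zero =>
    obtain rfl : G = ⊥ := edgeSet_eq_empty.1 ((Set.ncard_eq_zero hG).1 hn)
    exact isLinked_bot hsep
  | succ n ih =>
    obtain ⟨e, he⟩ : G.edgeSet.Nonempty := (Set.ncard_pos hG).1 (by lia)
    have hedge : (G.deleteEdges {e}).edgeSet = G.edgeSet \ {e} := edgeSet_deleteEdges _
    refine isLinked_of_deleteEdges he hsep fun A B h ↦ ih ?_ h ?_
    · exact hedge ▸ hG.subset Set.sdiff_subset
    · rw [hedge, Set.ncard_sdiff_singleton_of_mem he, hn, Nat.add_sub_cancel]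

end Menger

section Rays

variable {V : Type*} {G : SimpleGraph V} {A B T : Set V} {k : ℕ}

theorem exists_walk_forall_mem {S : Set V} (hS : (G.induce S).Preconnected) {a b : V}
    (ha : a ∈ S) (hb : b ∈ S) : ∃ p : G.Walk a b, ∀ z ∈ p.support, z ∈ S := by
  obtain ⟨p⟩ := hS ⟨a, ha⟩ ⟨b, hb⟩
  refine ⟨p.map (Embedding.induce S).toHom, fun z hz ↦ ?_⟩
  obtain ⟨z, -, rfl⟩ := List.mem_map.1 (p.support_map _ ▸ hz)
  exact z.2

theorem Separates.separatesFromInfinity (h : Separates G A B T) (hB : Bᶜ.Finite) :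
    SeparatesFromInfinity G A T := by
  refine fun C hC ↦ Set.disjoint_left.2 fun a ha haC ↦ ?_
  obtain ⟨b, hbC, hb⟩ := hC.exists_notMem_finite hB
  obtain ⟨p, hp⟩ :=
    exists_walk_forall_mem (connected_induce_componentCompl C).preconnected haC hbC
  obtain ⟨z, hz, hzT⟩ := h a ha b (not_not.1 hb) p
  exact C.notMem_of_mem (hp z hz) hzT

theorem isLinked_of_finite_compl [G.LocallyFinite] (hB : Bᶜ.Finite)
    (hsep : ∀ T : Finset V, T.card < k → ¬ Separates G A B T) : IsLinked G k A B := by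
  classical
  let H := G.deleteEdges {e | ∀ v ∈ e, v ∈ B}
  have hHfin : H.edgeSet.Finite := by
    refine (hB.biUnion fun v _ ↦ (G.incidenceSet v).toFinite).subset fun e he ↦ ?_
    rw [edgeSet_deleteEdges] at he
    obtain ⟨v, hve, hv⟩ : ∃ v ∈ e, v ∉ B := by simpa using he.2
    exact Set.mem_biUnion hv ⟨he.1, hve⟩
  refine (isLinked_of_forall_not_separates hHfin fun T hT hTsep ↦ hsep T hT ?_).mono
    (G.deleteEdges_le _)
  intro a ha b hb p
  obtain ⟨c, hc, q, hqp, hq⟩ := exists_walk_forall_mem_support_imp_eq p hb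
  have hqB : ∀ e ∈ q.edges, e ∉ {e | ∀ v ∈ e, v ∈ B} := by
    refine Sym2.ind fun u v huv h ↦ (q.adj_of_mem_edges huv).ne ?_
    exact (hq u (q.fst_mem_support_of_mem_edges huv) (h u (Sym2.mem_mk_left u v))).trans
      (hq v (q.snd_mem_support_of_mem_edges huv) (h v (Sym2.mem_mk_right u v))).symm
  obtain ⟨z, hz, hzT⟩ := hTsep a ha c hc (q.toDeleteEdges _ hqB)
  exact ⟨z, hqp (q.support_transfer _ ▸ hz), hzT⟩

/-- The vertices at distance at most `n` from `A`. -/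
def iteratedNeighborhood (G : SimpleGraph V) (A : Set V) : ℕ → Set V
  | 0 => A
  | n + 1 => iteratedNeighborhood G A n ∪ ⋃ x ∈ iteratedNeighborhood G A n, G.neighborSet x

theorem finite_iteratedNeighborhood [G.LocallyFinite] (hA : A.Finite) (n : ℕ) :
    (iteratedNeighborhood G A n).Finite := by
  induction n with
  | zero => exact hA
  | succ n ih => exact ih.union (ih.biUnion fun x _ ↦ Set.toFinite _)

theorem monotone_iteratedNeighborhood : Monotone (iteratedNeighborhood G A) :=
  monotone_nat_of_le_succ fun _ ↦ Set.subset_union_left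

theorem getVert_mem_iteratedNeighborhood {a b : V} (p : G.Walk a b) (ha : a ∈ A) (t : ℕ) :
    p.getVert t ∈ iteratedNeighborhood G A t := by
  induction t with
  | zero => rwa [p.getVert_zero]
  | succ t ih =>
    rcases lt_or_ge t p.length with h | h
    · exact .inr (Set.mem_biUnion ih (p.adj_getVert_succ h))
    · rw [p.getVert_of_length_le h] at ih
      rw [p.getVert_of_length_le (h.trans t.le_succ)]
      exact .inl ih

/-- A family of pairwise disjoint rays. -/
structure IsDisjointRays {ι : Type*} (G : SimpleGraph V) (r : ι → ℕ → V) : Prop where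
  adj : ∀ i t, G.Adj (r i t) (r i (t + 1))
  injective : Function.Injective r.uncurry

theorem IsLinked.exists_disjoint_initialSegments {n : ℕ}
    (h : IsLinked G k A (iteratedNeighborhood G A n)ᶜ) :
    ∃ r : Fin k → ℕ → V, (∀ i t, r i t ∈ iteratedNeighborhood G A t) ∧
      (∀ i, ∀ t < n, G.Adj (r i t) (r i (t + 1))) ∧
      Set.InjOn r.uncurry (Set.univ ×ˢ Set.Iic n) := by
  classical
  obtain ⟨a, b, p, ha, hb, hp⟩ := h
  have hlen : ∀ i, n < (p i).bypass.length := fun i ↦ by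
    by_contra! hle
    have := getVert_mem_iteratedNeighborhood (p i).bypass (ha i) (p i).bypass.length
    rw [Walk.getVert_length] at this
    exact hb i (monotone_iteratedNeighborhood hle this)
  have hmem : ∀ i t, (p i).bypass.getVert t ∈ (p i).support := fun i t ↦
    (p i).support_bypass_subset_support (Walk.getVert_mem_support _ t)
  refine ⟨fun i ↦ (p i).bypass.getVert, fun i ↦ getVert_mem_iteratedNeighborhood _ (ha i),
    fun i t ht ↦ Walk.adj_getVert_succ _ (ht.trans (hlen i)), ?_⟩
  rintro ⟨i, s⟩ ⟨-, hs⟩ ⟨j, t⟩ ⟨-, ht⟩ hst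
  change (p i).bypass.getVert s = (p j).bypass.getVert t at hst
  obtain rfl : i = j := by
    by_contra hij
    exact hp hij (hmem i s) (hst ▸ hmem j t)
  rw [(p i).bypass_isPath.getVert_injOn (le_trans hs (hlen i).le) (le_trans ht (hlen i).le) hst]

theorem exists_isDisjointRays_of_forall_isLinked [G.LocallyFinite] (hA : A.Finite)
    (h : ∀ n, IsLinked G k A (iteratedNeighborhood G A n)ᶜ) :
    ∃ r : Fin k → ℕ → V, IsDisjointRays G r := by
  choose p hpA hadj hinj using fun n ↦ (h n).exists_disjoint_initialSegments
  let U : Ultrafilter ℕ := Filter.hyperfilter ℕ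
  have hU : ∀ m : ℕ, ∀ᶠ n in U, m ≤ n := fun m ↦
    Nat.hyperfilter_le_atTop (Filter.eventually_ge_atTop m)
  have hlim : ∀ i t, ∃ v, ∀ᶠ n in U, p n i t = v := fun i t ↦ by
    obtain ⟨v, -, hv⟩ := (U.eventually_exists_mem_iff (P := fun v n ↦ p n i t = v)
      (finite_iteratedNeighborhood hA t)).1 (.of_forall fun n ↦ ⟨_, hpA n i t, rfl⟩)
    exact ⟨v, hv⟩
  choose r hr using hlim
  refine ⟨r, fun i t ↦ ?_, ?_⟩
  · obtain ⟨n, h₁, h₂, hn⟩ := ((hr i t).and ((hr i (t + 1)).and (hU (t + 1)))).exists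
    exact h₁ ▸ h₂ ▸ hadj n i t hn
  · rintro ⟨i, s⟩ ⟨j, t⟩ hst
    obtain ⟨n, h₁, h₂, hs, ht⟩ :=
      ((hr i s).and ((hr j t).and ((hU s).and (hU t)))).exists
    exact hinj n (show (i, s) ∈ Set.univ ×ˢ Set.Iic n from ⟨trivial, hs⟩)
      (show (j, t) ∈ Set.univ ×ˢ Set.Iic n from ⟨trivial, ht⟩) (h₁.trans (hst.trans h₂.symm))

theorem OneEnded.exists_isDisjointRays [G.LocallyFinite] (hone : OneEnded G)
    (htrans : ∀ u v : V, ∃ α : G ≃g G, α u = v) (k : ℕ) :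
    ∃ r : Fin k → ℕ → V, IsDisjointRays G r := by
  obtain ⟨A, hA, hAsep⟩ := hone.exists_finite_not_separatesFromInfinity htrans k
  refine exists_isDisjointRays_of_forall_isLinked hA fun n ↦ ?_
  have hfin : (iteratedNeighborhood G A n)ᶜᶜ.Finite := by
    rw [compl_compl]
    exact finite_iteratedNeighborhood hA n
  exact isLinked_of_finite_compl hfin fun T hT h ↦ hAsep T hT (h.separatesFromInfinity hfin)

end Rays

section Crossbars

variable {V ι : Type*} {G : SimpleGraph V} {r : ι → ℕ → V} {i j m : ι}

theorem IsDisjointRays.ne (hr : IsDisjointRays G r) (hij : i ≠ j) (s t : ℕ) : r i s ≠ r j t :=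
  fun h ↦ hij (congr_arg Prod.fst (hr.injective (a₁ := (i, s)) (a₂ := (j, t)) h))

theorem IsDisjointRays.injective_apply (hr : IsDisjointRays G r) (i : ι) :
    Function.Injective (r i) :=
  fun s t h ↦ congr_arg Prod.snd (hr.injective (a₁ := (i, s)) (a₂ := (i, t)) h)

theorem IsDisjointRays.disjoint_singleton_range (hr : IsDisjointRays G r) (hij : i ≠ j) (s : ℕ) :
    Disjoint {r i s} (Set.range (r j)) :=
  Set.disjoint_singleton_left.2 fun ⟨t, ht⟩ ↦ hr.ne hij s t ht.symm

theorem IsDisjointRays.disjoint_range (hr : IsDisjointRays G r) (hij : i ≠ j) :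
    Disjoint (Set.range (r i)) (Set.range (r j)) :=
  Set.disjoint_range_iff.2 fun s t ↦ hr.ne hij s t

/-- The rays `i` and `j` are joined, outside every finite set, by a walk that meets the rays of the
family only at its two ends. -/
def InfinitelyLinked (G : SimpleGraph V) (r : ι → ℕ → V) (i j : ι) : Prop :=
  ∀ K : Set V, K.Finite → ∃ s t, ∃ p : G.Walk (r i s) (r j t), (∀ z ∈ p.support, z ∉ K) ∧
    ∀ l n, r l n ∈ p.support → r l n = r i s ∨ r l n = r j t

theorem InfinitelyLinked.symm (h : InfinitelyLinked G r i j) : InfinitelyLinked G r j i := by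
  intro K hK
  obtain ⟨s, t, p, hpK, hp⟩ := h K hK
  exact ⟨t, s, p.reverse, fun z hz ↦ hpK z (by simpa using hz),
    fun l n hn ↦ (hp l n (by simpa using hn)).symm⟩

theorem OneEnded.exists_infinitelyLinked [G.LocallyFinite] [Finite ι] [Nontrivial ι]
    (hone : OneEnded G) (hG : G.Preconnected) (hr : IsDisjointRays G r) (i : ι) :
    ∃ j ≠ i, InfinitelyLinked G r i j := by
  by_contra! h
  simp only [InfinitelyLinked, not_forall] at h
  choose! K hK hlink using h
  have hKfin : (⋃ j ∈ ({i}ᶜ : Set ι), K j).Finite := (Set.toFinite _).biUnion hK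
  obtain ⟨C, hC⟩ := hone.exists_infinite_componentCompl hKfin
  have hrC : ∀ j, ∃ t, r j t ∈ C := fun j ↦ by
    obtain ⟨-, ⟨t, rfl⟩, ht⟩ :=
      (Set.infinite_range_of_injective (hr.injective_apply j)).exists_notMem_finite
        (hone.finite_compl_componentCompl hG hKfin hC)
    exact ⟨t, not_not.1 ht⟩
  obtain ⟨j, hj⟩ := exists_ne i
  obtain ⟨s, hs⟩ := hrC i
  obtain ⟨t, ht⟩ := hrC j
  obtain ⟨p, hp⟩ :=
    exists_walk_forall_mem (connected_induce_componentCompl C).preconnected hs ht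
  obtain ⟨_, ⟨_, ⟨j, rfl⟩, _, ⟨hj, rfl⟩, t, rfl⟩, q, hqp, hq⟩ :=
    exists_walk_forall_mem_support_imp_eq (T := ⋃ j, ⋃ (_ : j ≠ i), Set.range (r j)) p
      (Set.mem_biUnion hj ⟨t, rfl⟩)
  obtain ⟨_, ⟨s, rfl⟩, q', hq'q, hq'⟩ :=
    exists_walk_forall_mem_support_imp_eq (T := Set.range (r i)) q.reverse ⟨s, rfl⟩
  rw [Walk.support_reverse] at hq'q
  have hq'q : ∀ z ∈ q'.support, z ∈ q.support := fun z hz ↦ List.mem_reverse.1 (hq'q hz)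
  refine hlink j hj ⟨s, t, q'.reverse, fun z hz hzK ↦ ?_, fun l n hn ↦ ?_⟩
  · rw [Walk.support_reverse, List.mem_reverse] at hz
    exact C.notMem_of_mem (hp z (hqp (hq'q z hz))) (Set.mem_biUnion hj hzK)
  · rw [Walk.support_reverse, List.mem_reverse] at hn
    rcases eq_or_ne l i with rfl | hl
    · exact .inl (hq' _ hn ⟨n, rfl⟩)
    · exact .inr (hq _ (hq'q _ hn) (Set.mem_biUnion hl ⟨n, rfl⟩))

theorem exists_walk_adj_of_ne {a b : V} (p : G.Walk a b) (hab : a ≠ b) :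
    ∃ c, ∃ q : G.Walk a c, G.Adj c b ∧ q.support ⊆ p.support ∧ b ∉ q.support := by
  induction p with
  | nil => exact absurd rfl hab
  | @cons a a' b h p ih =>
    rcases eq_or_ne a' b with rfl | hne
    · exact ⟨a, .nil, h, by simp, by simpa using hab.symm⟩
    · obtain ⟨c, q, hc, hq, hb⟩ := ih hne
      exact ⟨c, .cons h q, hc, by simpa using List.cons_subset_cons a hq,
        by simpa using ⟨hab.symm, hb⟩⟩

theorem InfinitelyLinked.exists_walk_adj (h : InfinitelyLinked G r m i)
    (hr : IsDisjointRays G r) (hmi : m ≠ i) {K : Set V} (hK : K.Finite) :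
    ∃ s t w, ∃ q : G.Walk (r m s) w, G.Adj (r i t) w ∧ (∀ z ∈ q.support, z ∉ K) ∧
      ∀ l n, r l n ∈ q.support → r l n = r m s := by
  obtain ⟨s, t, p, hpK, hp⟩ := h K hK
  obtain ⟨w, q, hw, hqp, hq⟩ := exists_walk_adj_of_ne p (hr.ne hmi s t)
  refine ⟨s, t, w, q, hw.symm, fun z hz ↦ hpK z (hqp hz), fun l n hn ↦ ?_⟩
  exact (hp l n (hqp hn)).resolve_right fun h ↦ hq (h ▸ hn)

theorem connected_induce_image_of_ordConnected {f : ℕ → V} (hf : ∀ t, G.Adj (f t) (f (t + 1)))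
    {S : Set ℕ} [S.OrdConnected] (hS : S.Nonempty) : (G.induce (f '' S)).Connected := by
  let F : hasse ℕ →g G :=
    ⟨f, fun {a b} h ↦ by
      rcases h with h | h <;> obtain rfl := Order.covBy_iff_add_one_eq.1 h
      exacts [hf _, (hf _).symm]⟩
  refine connected_induce_image F ((connected_iff _).2 ⟨?_, hS.to_subtype⟩)
  have hle : ∀ a b (ha : a ∈ S) (hb : b ∈ S), a ≤ b →
      ((hasse ℕ).induce S).Reachable ⟨a, ha⟩ ⟨b, hb⟩ := by
    intro a b ha hb hab
    induction b, hab using Nat.le_induction with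
    | base => rfl
    | succ b hab ih =>
      have hbS := Set.Icc_subset S ha hb ⟨hab, b.le_succ⟩
      exact (ih hbS).trans (Adj.reachable (.inl (Order.covBy_add_one b)))
  rintro ⟨a, ha⟩ ⟨b, hb⟩
  rcases le_total a b with h | h
  exacts [hle a b ha hb h, (hle b a hb ha h).symm]

/-- A finite connected set `B` that joins the rays `u` and `v`, is disjoint from both, and meets
the ray `s` in the segment from `s M` to `s N`. -/
structure IsCrossbar (G : SimpleGraph V) (s u v : ℕ → V) (M N : ℕ) (B : Set V) : Prop where
  finite : B.Finite
  connected : (G.induce B).Connected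
  le : M ≤ N
  mem_iff : ∀ t, s t ∈ B ↔ t ∈ Set.Icc M N
  disjoint_left : Disjoint (Set.range u) B
  disjoint_right : Disjoint (Set.range v) B
  adj_left : ∃ t, ∃ b ∈ B, G.Adj (u t) b
  adj_right : ∃ t, ∃ b ∈ B, G.Adj (v t) b

theorem IsCrossbar.disjoint_singleton {s u v : ℕ → V} {M N : ℕ} {B : Set V}
    (h : IsCrossbar G s u v M N B) {t : ℕ} (ht : t ∉ Set.Icc M N) : Disjoint {s t} B :=
  Set.disjoint_singleton_left.2 fun htB ↦ ht ((h.mem_iff t).1 htB)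

theorem IsCrossbar.connected_induce_singleton_union {s u v : ℕ → V} {M N : ℕ} {B : Set V}
    (h : IsCrossbar G s u v M N B) {x : V} {t : ℕ} (ht : t ∈ Set.Icc M N)
    (hx : G.Adj x (s t)) : (G.induce ({x} ∪ B)).Connected :=
  connected_induce_union .of_subsingleton h.connected.preconnected rfl ((h.mem_iff t).2 ht) hx

theorem exists_isCrossbar (hr : IsDisjointRays G r) (hmi : m ≠ i) (hmj : m ≠ j)
    (hi : InfinitelyLinked G r m i) (hj : InfinitelyLinked G r m j) {K : Set V} (hK : K.Finite)
    {M : ℕ} (hKM : ∀ t, M ≤ t → r m t ∉ K) :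
    ∃ N B, IsCrossbar G (r m) (r i) (r j) M N B ∧ Disjoint B K := by
  have hK' : (K ∪ r m '' Set.Iio M).Finite := hK.union ((Set.finite_Iio M).image _)
  obtain ⟨a, t, x, p, hx, hpK, hp⟩ := hi.exists_walk_adj hr hmi hK'
  obtain ⟨b, t', y, q, hy, hqK, hq⟩ := hj.exists_walk_adj hr hmj hK'
  have ha : M ≤ a := not_lt.1 fun h ↦ hpK _ p.start_mem_support (.inr ⟨a, h, rfl⟩)
  have hb : M ≤ b := not_lt.1 fun h ↦ hqK _ q.start_mem_support (.inr ⟨b, h, rfl⟩)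
  let I : Set ℕ := Set.Icc M (max a b)
  have haI : a ∈ I := ⟨ha, le_max_left a b⟩
  have hbI : b ∈ I := ⟨hb, le_max_right a b⟩
  let B : Set V := {z | z ∈ p.support} ∪ r m '' I ∪ {z | z ∈ q.support}
  have hrB : ∀ l n, r l n ∈ B → r l n ∈ r m '' I := by
    rintro l n ((hn | hn) | hn)
    exacts [hp l n hn ▸ ⟨a, haI, rfl⟩, hn, hq l n hn ▸ ⟨b, hbI, rfl⟩]
  have hdisj : ∀ l, m ≠ l → Disjoint (Set.range (r l)) B := by
    refine fun l hl ↦ Set.disjoint_left.2 ?_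
    rintro _ ⟨n, rfl⟩ hn
    obtain ⟨t, -, ht⟩ := hrB l n hn
    exact hr.ne hl t n ht
  refine ⟨max a b, B, ⟨?_, ?_, haI.1.trans haI.2, fun t ↦ ⟨fun ht ↦ ?_, fun ht ↦ ?_⟩,
    hdisj i hmi, hdisj j hmj, ⟨t, x, .inl (.inl p.end_mem_support), hx⟩,
    ⟨t', y, .inr q.end_mem_support, hy⟩⟩, ?_⟩
  · exact (p.support.finite_toSet.union ((Set.finite_Icc _ _).image _)).union
      q.support.finite_toSet
  · have hI := connected_induce_image_of_ordConnected (hr.adj m) ⟨a, haI⟩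
    have hpI := induce_union_connected p.connected_induce_support.preconnected hI.preconnected
      ⟨_, p.start_mem_support, a, haI, rfl⟩
    exact induce_union_connected hpI.preconnected q.connected_induce_support.preconnected
      ⟨r m b, Or.inr ⟨b, hbI, rfl⟩, q.start_mem_support⟩
  · obtain ⟨t', ht', h⟩ := hrB m t ht
    exact hr.injective_apply m h ▸ ht'
  · exact .inl (.inr ⟨t, ht, rfl⟩)
  · refine Set.disjoint_left.2 ?_
    rintro z ((hz | ⟨t, ht, rfl⟩) | hz) hzK
    exacts [hpK z hz (.inl hzK), hKM t ht.1 hzK, hqK z hz (.inl hzK)]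

end Crossbars

section BranchSets

variable {V ι : Type*} {G : SimpleGraph V} {r : ι → ℕ → V} {i j m : ι} {f : ℕ → V}
  {A B L K : Set V}

theorem exists_ne_and_ne_of_forall_exists_ne {P : Fin 3 → Fin 3 → Prop}
    (hsymm : ∀ i j, P i j → P j i) (h : ∀ i, ∃ j ≠ i, P i j) :
    ∃ m i j, m ≠ i ∧ m ≠ j ∧ i ≠ j ∧ P m i ∧ P m j := by
  obtain ⟨j, hj, h0j⟩ := h 0
  have hthird : ∀ j : Fin 3, ∃ l, l ≠ 0 ∧ l ≠ j := by decide
  obtain ⟨l, hl, hlj⟩ := hthird j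
  obtain ⟨k, hk, hlk⟩ := h l
  obtain hk | hk : k = 0 ∨ k = j := by lia
  · exact ⟨0, j, l, hj.symm, hl.symm, hlj.symm, h0j, hsymm _ _ (hk ▸ hlk)⟩
  · exact ⟨j, 0, l, hj, hlj.symm, hl.symm, hsymm _ _ h0j, hsymm _ _ (hk ▸ hlk)⟩

theorem pairwise_disjoint_vec_three {α : Type*} {S T U : Set α} (hST : Disjoint S T)
    (hSU : Disjoint S U) (hTU : Disjoint T U) :
    Pairwise (Function.onFun Disjoint ![S, T, U]) := by
  intro i j hij
  fin_cases i <;> fin_cases j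
  exacts [absurd rfl hij, hST, hSU, hST.symm, absurd rfl hij, hTU, hSU.symm, hTU.symm,
    absurd rfl hij]

theorem connected_induce_image_Iic_union (hf : ∀ t, G.Adj (f t) (f (t + 1)))
    (hB : (G.induce B).Connected) {n t : ℕ} (ht : t ≤ n) {b : V} (hb : b ∈ B)
    (hadj : G.Adj (f t) b) : (G.induce (f '' Set.Iic n ∪ B)).Connected :=
  connected_induce_union (connected_induce_image_of_ordConnected hf ⟨t, ht⟩).preconnected
    hB.preconnected ⟨t, ht, rfl⟩ hb hadj

theorem exists_connected_induce_image_Iic_union (hf : ∀ t, G.Adj (f t) (f (t + 1)))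
    (hA : (G.induce A).Connected) (hL : (G.induce L).Connected)
    (hfA : ∃ t, ∃ a ∈ A, G.Adj (f t) a) (hfL : ∃ t, ∃ a ∈ L, G.Adj (f t) a) :
    ∃ n, (G.induce (f '' Set.Iic n ∪ A)).Connected ∧
      (G.induce (f '' Set.Iic n ∪ L)).Connected := by
  obtain ⟨t, a, ha, hta⟩ := hfA
  obtain ⟨t', a', ha', hta'⟩ := hfL
  exact ⟨max t t', connected_induce_image_Iic_union hf hA (le_max_left t t') ha hta,
    connected_induce_image_Iic_union hf hL (le_max_right t t') ha' hta'⟩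

theorem connected_induce_image_Iic_union_componentCompl
    (hf : ∀ t, G.Adj (f t) (f (t + 1))) (hinj : Function.Injective f) {n : ℕ}
    (hfK : ∀ t, f t ∈ K → t ≤ n) {C : G.ComponentCompl K} (hC : (C : Set V)ᶜ.Finite) :
    (G.induce (f '' Set.Iic n ∪ C)).Connected := by
  obtain ⟨_, ⟨t, ht, rfl⟩, htC⟩ :=
    ((Set.Ioi_infinite n).image hinj.injOn).exists_notMem_finite hC
  have htail : f '' Set.Ioi n ⊆ C := by
    refine subset_componentCompl
      (connected_induce_image_of_ordConnected hf ⟨t, ht⟩).preconnected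
      (Set.disjoint_left.2 ?_) ⟨f t, ⟨t, ht, rfl⟩, not_not.1 htC⟩
    rintro _ ⟨t, ht, rfl⟩ htK
    exact (hfK t htK).not_gt ht
  exact connected_induce_image_Iic_union hf (connected_induce_componentCompl C) le_rfl
    (htail ⟨n + 1, n.lt_succ_self, rfl⟩) (hf n)

theorem IsDisjointRays.exists_cofinite_connected_induce_union [G.LocallyFinite]
    (hr : IsDisjointRays G r) (hone : OneEnded G) (hG : G.Preconnected) (hij : i ≠ j)
    (hK : K.Finite) (hi : Disjoint (Set.range (r i)) K) (hj : Disjoint (Set.range (r j)) K)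
    (p q : ℕ) : ∃ C : Set V, Cᶜ.Finite ∧ Disjoint (r i '' Set.Iic p ∪ r j '' Set.Iic q ∪ K) C ∧
      (G.induce (r i '' Set.Iic p ∪ C)).Connected ∧
      (G.induce (r j '' Set.Iic q ∪ C)).Connected := by
  have hfin : (r i '' Set.Iic p ∪ r j '' Set.Iic q ∪ K).Finite :=
    (((Set.finite_Iic p).image _).union ((Set.finite_Iic q).image _)).union hK
  obtain ⟨C, hC⟩ := hone.exists_infinite_componentCompl hfin
  have hCc := hone.finite_compl_componentCompl hG hfin hC
  refine ⟨C, hCc, C.disjoint_right,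
    connected_induce_image_Iic_union_componentCompl (hr.adj i) (hr.injective_apply i) ?_ hCc,
    connected_induce_image_Iic_union_componentCompl (hr.adj j) (hr.injective_apply j) ?_ hCc⟩
  · rintro t ((⟨t', ht', h⟩ | ⟨t', -, h⟩) | h)
    · exact hr.injective_apply i h ▸ ht'
    · exact absurd h.symm (hr.ne hij t t')
    · exact absurd h (hi.notMem_of_mem_left ⟨t, rfl⟩)
  · rintro t ((⟨t', -, h⟩ | ⟨t', ht', h⟩) | h)
    · exact absurd h (hr.ne hij t' t)
    · exact hr.injective_apply j h ▸ ht'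
    · exact absurd h (hj.notMem_of_mem_left ⟨t, rfl⟩)

theorem IsCrossbar.exists_isK33MinorMinusEdge [G.LocallyFinite] (hone : OneEnded G)
    (hG : G.Preconnected) (hr : IsDisjointRays G r) (hmi : m ≠ i) (hmj : m ≠ j) (hij : i ≠ j)
    {N N' : ℕ} (hA : IsCrossbar G (r m) (r i) (r j) 0 N A)
    (hL : IsCrossbar G (r m) (r i) (r j) (N + 2) N' L) (hAL : Disjoint A L) :
    ∃ R D, IsK33MinorMinusEdge G R D := by
  obtain ⟨p, hXA, hXL⟩ := exists_connected_induce_image_Iic_union (hr.adj i) hA.connected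
    hL.connected hA.adj_left hL.adj_left
  obtain ⟨q, hYA, hYL⟩ := exists_connected_induce_image_Iic_union (hr.adj j) hA.connected
    hL.connected hA.adj_right hL.adj_right
  set X := r i '' Set.Iic p
  set Y := r j '' Set.Iic q
  let c := r m (N + 1)
  have hX : X ⊆ Set.range (r i) := Set.image_subset_range ..
  have hY : Y ⊆ Set.range (r j) := Set.image_subset_range ..
  have hci : Disjoint {c} (Set.range (r i)) := hr.disjoint_singleton_range hmi (N + 1)
  have hcj : Disjoint {c} (Set.range (r j)) := hr.disjoint_singleton_range hmj (N + 1)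
  have hcA := hA.connected_induce_singleton_union ⟨N.zero_le, le_rfl⟩ (hr.adj m N).symm
  have hcL := hL.connected_induce_singleton_union ⟨le_rfl, hL.le⟩ (hr.adj m (N + 1))
  obtain ⟨C, hC, hdisj, hXC, hYC⟩ := hr.exists_cofinite_connected_induce_union hone hG hij
    (((Set.finite_singleton c).union hA.finite).union hL.finite)
    ((hci.symm.union_right hA.disjoint_left).union_right hL.disjoint_left)
    ((hcj.symm.union_right hA.disjoint_right).union_right hL.disjoint_right) p q
  simp only [Set.disjoint_union_left] at hdisj
  obtain ⟨⟨hdisjX, hdisjY⟩, ⟨hdisjc, hdisjA⟩, hdisjL⟩ := hdisj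
  have := hone.infinite
  refine ⟨![{c}, X, Y], ![C, A, L],
    pairwise_disjoint_vec_three (hci.mono_right hX) (hcj.mono_right hY)
      ((hr.disjoint_range hij).mono hX hY),
    pairwise_disjoint_vec_three hdisjA.symm hdisjL.symm hAL, fun k l ↦ ?_, fun k l hkl ↦ ?_,
    fun k ↦ ?_, fun l ↦ ?_, fun k ↦ ?_, fun l hl ↦ ?_, hC⟩
  · fin_cases k <;> fin_cases l
    exacts [hdisjc, hA.disjoint_singleton (by simp), hL.disjoint_singleton (by simp),
      hdisjX, hA.disjoint_left.mono_left hX, hL.disjoint_left.mono_left hX,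
      hdisjY, hA.disjoint_right.mono_left hY, hL.disjoint_right.mono_left hY]
  · fin_cases k <;> fin_cases l
    exacts [absurd rfl hkl, hcA, hcL, hXC, hXA, hXL, hYC, hYA, hYL]
  · fin_cases k
    exacts [Set.singleton_nonempty c, Set.nonempty_Iic.image _, Set.nonempty_Iic.image _]
  · fin_cases l
    exacts [compl_compl C ▸ hC.infinite_compl.nonempty,
      Set.nonempty_coe_sort.1 hA.connected.nonempty, Set.nonempty_coe_sort.1 hL.connected.nonempty]
  · fin_cases k
    exacts [Set.finite_singleton c, (Set.finite_Iic p).image _, (Set.finite_Iic q).image _]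
  · fin_cases l
    exacts [absurd rfl hl, hA.finite, hL.finite]

theorem OneEnded.exists_isK33MinorMinusEdge [G.LocallyFinite] (hone : OneEnded G)
    (htrans : ∀ u v : V, ∃ α : G ≃g G, α u = v) : ∃ R D, IsK33MinorMinusEdge G R D := by
  have hG := hone.preconnected htrans
  obtain ⟨r, hr⟩ := hone.exists_isDisjointRays htrans 3
  obtain ⟨m, i, j, hmi, hmj, hij, hi, hj⟩ := exists_ne_and_ne_of_forall_exists_ne
    (fun _ _ ↦ InfinitelyLinked.symm) (hone.exists_infinitelyLinked hG hr)
  obtain ⟨N, A, hA, -⟩ :=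
    exists_isCrossbar (M := 0) hr hmi hmj hi hj Set.finite_empty fun _ _ ↦ Set.notMem_empty _
  obtain ⟨N', L, hL, hLA⟩ :=
    exists_isCrossbar (M := N + 2) hr hmi hmj hi hj hA.finite fun t ht h ↦ by
      have := ((hA.mem_iff t).1 h).2
      lia
  exact hA.exists_isK33MinorMinusEdge hone hG hr hmi hmj hij hL hLA.symm

end BranchSets

/-- Krön: in a locally finite, vertex-transitive, 1-ended planar graph, every face boundary
of every planar embedding contains only finitely many edges. -/
theorem face_boundaries_finite
    {V : Type*} (G : SimpleGraph V) [G.LocallyFinite]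
    (htrans : ∀ u v : V, ∃ α : G ≃g G, α u = v)
    (hone : OneEnded G)
    (emb : PlanarEmbedding G) :
    ∀ F : Set (ℝ × ℝ), emb.IsFace F → (emb.boundaryEdges F).Finite := by
  rintro F ⟨x, -, rfl⟩
  obtain ⟨R, D, h⟩ := hone.exists_isK33MinorMinusEdge htrans
  exact emb.finite_boundaryEdges <| h.finite_setOf_vpos_mem_closure htrans emb
    isPreconnected_connectedComponentIn
    (Set.subset_compl_iff_disjoint_right.1 (connectedComponentIn_subset _ _))
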